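/- Let ρ be a quasi-periodic labelling and let G_ρ be the associated finitely generated simple left orderable group of homeomorphisms of ℝ. Then G_ρ has vanishing second bounded cohomology with trivial real coefficients: every bounded 2-cocycle ω : G_ρ × G_ρ → ℝ is the coboundary of a bounded function φ : G_ρ → ℝ. -/

import Mathlib

/-! ### Letters, labellings and quasi-periodicity -/

/-- The four letters `a, b, a⁻¹, b⁻¹`. -/
inductive Letter : Type
  | a : Letter
  | b : Letter
  | A : Letter  -- `a⁻¹`
  | B : Letter  -- `b⁻¹`
  deriving DecidableEq

/-- The formal inverse of a letter. -/
def Letter.inv : Letter → Letter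
  | .a => .A
  | .A => .a
  | .b => .B
  | .B => .b

/-- We encode the set of half-integers `½ℤ` by `ℤ` via `m ↦ m / 2`; integer points
correspond to even indices and proper half-integer points to odd indices.
A labelling assigns `a^{±1}` to integer points and `b^{±1}` to half-integer points. -/
def IsLabelling (ρ : ℤ → Letter) : Prop :=
  ∀ m : ℤ, (Even m → ρ m = Letter.a ∨ ρ m = Letter.A) ∧
    (Odd m → ρ m = Letter.b ∨ ρ m = Letter.B)

/-- The word of the labelling `ρ` along the block `{k, k+1, …, k+n}` (in the
half-integer encoding, the block of size `n+1` starting at `k/2`). -/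
def blockWord (ρ : ℤ → Letter) (k : ℤ) (n : ℕ) : List Letter :=
  (List.range (n + 1)).map fun i => ρ (k + i)

/-- The formal inverse of a word: reverse the word and invert each letter. -/
def wordInv (w : List Letter) : List Letter :=
  (w.map Letter.inv).reverse

/-- A labelling is quasi-periodic if (1) every subword of the labelling appears as a
subword (string of consecutive letters) of every sufficiently large block, and (2) the
formal inverse of every subword of the labelling is again a subword of the labelling. -/
def IsQuasiPeriodic (ρ : ℤ → Letter) : Prop :=
  IsLabelling ρ ∧
    (∀ (k : ℤ) (n : ℕ), ∃ N : ℕ, ∀ (k' : ℤ) (n' : ℕ), N ≤ n' + 1 →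
      (blockWord ρ k n) <:+: (blockWord ρ k' n')) ∧
    (∀ (k : ℤ) (n : ℕ), ∃ k' : ℤ, blockWord ρ k' n = wordInv (blockWord ρ k n))

/-! ### Thompson's group `F` and the subgroup `H`

Orientation-preserving homeomorphisms of `[0,1]` are realised as order-automorphisms
of `ℝ` that are the identity outside `[0,1]`; orientation-preserving homeomorphisms of
the line are order-automorphisms of `ℝ`. -/

/-- A dyadic rational real number, i.e. an element of `ℤ[1/2]`. -/
def IsDyadic (x : ℝ) : Prop :=
  ∃ (a : ℤ) (b : ℕ), x = (a : ℝ) / 2 ^ b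

/-- Membership in Thompson's group `F`: the identity outside `[0,1]`, and on `[0,1]`
piecewise linear with breakpoints in `ℤ[1/2]` and slopes integer powers of `2`. -/
def InThompsonF (f : ℝ ≃o ℝ) : Prop :=
  (∀ x : ℝ, x ∉ Set.Icc (0 : ℝ) 1 → f x = x) ∧
    ∃ (m : ℕ) (x : Fin (m + 1) → ℝ), x 0 = 0 ∧ x (Fin.last m) = 1 ∧ StrictMono x ∧
      (∀ i, IsDyadic (x i)) ∧
      ∀ i : Fin m, ∃ (k : ℤ) (c : ℝ),
        ∀ t ∈ Set.Icc (x i.castSucc) (x i.succ), f t = 2 ^ k * t + c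

/-- Membership in the subgroup `H ≤ F` of elements whose slopes at `0` and `1`
coincide. -/
def InH (f : ℝ ≃o ℝ) : Prop :=
  InThompsonF f ∧
    ∃ (k : ℤ) (ε : ℝ), 0 < ε ∧ (∀ t ∈ Set.Icc (0 : ℝ) ε, f t = 2 ^ k * t) ∧
      ∀ t ∈ Set.Icc (1 - ε) (1 : ℝ), f t = 1 + 2 ^ k * (t - 1)

/-! ### The generators of `G_ρ` -/

/-- `ζ` is the homeomorphism of `ℝ` which on each `[n, n+1]` is the conjugate of `ν`
(a homeomorphism of `[0,1]`) by the orientation-preserving isometry `[n,n+1] → [0,1]`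
if `ρ(n + ½) = b`, and by the orientation-reversing isometry if `ρ(n + ½) = b⁻¹`.
(In the encoding of `½ℤ` by `ℤ`, the point `n + ½` has index `2n + 1`.) -/
def IsZeta (ρ : ℤ → Letter) (ν ζ : ℝ ≃o ℝ) : Prop :=
  ∀ n : ℤ, ∀ x ∈ Set.Icc (n : ℝ) (n + 1),
    (ρ (2 * n + 1) = Letter.b → ζ x = n + ν (x - n)) ∧
    (ρ (2 * n + 1) = Letter.B → ζ x = (n + 1) - ν ((n + 1) - x))

/-- `χ` is the homeomorphism of `ℝ` which on each `[n-½, n+½]` is the conjugate of `ν`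
by the orientation-preserving isometry `[n-½, n+½] → [0,1]` if `ρ(n) = a`, and by the
orientation-reversing isometry if `ρ(n) = a⁻¹`. -/
def IsChi (ρ : ℤ → Letter) (ν χ : ℝ ≃o ℝ) : Prop :=
  ∀ n : ℤ, ∀ x ∈ Set.Icc ((n : ℝ) - 1/2) ((n : ℝ) + 1/2),
    (ρ (2 * n) = Letter.a → χ x = ((n : ℝ) - 1/2) + ν (x - ((n : ℝ) - 1/2))) ∧
    (ρ (2 * n) = Letter.A → χ x = ((n : ℝ) + 1/2) - ν (((n : ℝ) + 1/2) - x))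

/-! ### Bounded cohomology in degree two -/

/-- A bounded 2-cocycle on `G` with trivial real coefficients. -/
def IsBounded2Cocycle {G : Type*} [Group G] (ω : G → G → ℝ) : Prop :=
  (∃ C : ℝ, ∀ g h : G, |ω g h| ≤ C) ∧
    ∀ g₁ g₂ g₃ : G, ω g₂ g₃ - ω (g₁ * g₂) g₃ + ω g₁ (g₂ * g₃) - ω g₁ g₂ = 0

/-- `ω` is the coboundary of a bounded real-valued function. -/
def IsCoboundaryOfBounded {G : Type*} [Group G] (ω : G → G → ℝ) : Prop :=
  ∃ φ : G → ℝ, (∃ C : ℝ, ∀ g : G, |φ g| ≤ C) ∧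
    ∀ g h : G, ω g h = φ h - φ (g * h) + φ g

/-- A group is 2-boundedly acyclic if `H²_b(G; ℝ) = 0`, i.e. every bounded 2-cocycle is
the coboundary of a bounded function. -/
def Is2BoundedlyAcyclic (G : Type*) [Group G] : Prop :=
  ∀ ω : G → G → ℝ, IsBounded2Cocycle ω → IsCoboundaryOfBounded ω

/-- A 2-cocycle is homogeneous if it vanishes on powers of a single element. -/
def IsHomogeneous {G : Type*} [Group G] (ω : G → G → ℝ) : Prop :=
  ∀ (g : G) (i j : ℤ), ω (g ^ i) (g ^ j) = 0

/-!
Every bounded cocycle is cohomologous to a homogeneous one, which is invariant under conjugation and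
vanishes on commuting pairs. By quasi-periodicity, the units surrounded by a long prescribed pattern
of labels, the markers, occur with bounded gaps, but are as far apart as we wish if the pattern is
long enough; moreover, `G_ρ` can act on all markers at once without moving anything else. Consider
disjoint balls, centred either at the markers or at the midpoints of the gaps between them. A single
element of `G_ρ` moves all their slightly shrunk copies off themselves within the balls, so that any
two elements of `G_ρ` supported in such copies commute with conjugates of each other; multiplying by
these conjugates doubles the value of a homogeneous cocycle, which therefore vanishes on such pairs.
On the other hand, an element of `G_ρ` agrees near sparse markers with an element of `G_ρ` supported
in the balls around them, and is thus a product of two elements, supported in these balls and in the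
gaps. A homogeneous cocycle which vanishes on both kinds of elements is, in the limit of sparser and
sparser markers, the coboundary of a bounded function.
-/

open Filter Topology
open scoped commutatorElement

/-! ### Limits along ultrafilters and Cesàro means -/

section Limits

variable {α : Type*} {u : α → ℝ} {C : ℝ}

theorem tendsto_limUnder_of_abs_le (f : Ultrafilter α) (h : ∀ a, |u a| ≤ C) :
    Tendsto u f (𝓝 (limUnder (f : Filter α) u)) := by
  have hmem : (f.map u : Filter ℝ) ≤ 𝓟 (Set.Icc (-C) C) :=
    le_principal_iff.2 (mem_map.2 (univ_mem' fun a ↦ abs_le.1 (h a)))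
  obtain ⟨l, -, hl⟩ := isCompact_Icc.ultrafilter_le_nhds (f.map u) hmem
  exact tendsto_nhds_limUnder ⟨l, hl⟩

theorem abs_limUnder_le (f : Ultrafilter α) (h : ∀ a, |u a| ≤ C) :
    |limUnder (f : Filter α) u| ≤ C :=
  le_of_tendsto (tendsto_limUnder_of_abs_le f h).abs (Eventually.of_forall h)

end Limits

theorem eq_zero_of_map_add_of_abs_le {M : Type*} [AddMonoid M] {f : M → ℝ} {C : ℝ}
    (hadd : ∀ x y, f (x + y) = f x + f y) (hC : ∀ x, |f x| ≤ C) (x : M) : f x = 0 := by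
  have hzero : f 0 = 0 := by simpa using hadd 0 0
  have hsmul (n : ℕ) : f (n • x) = n * f x := by
    induction n with
    | zero => simpa using hzero
    | succ n ih => rw [succ_nsmul, hadd, ih]; push_cast; ring
  by_contra hne
  obtain ⟨n, hn⟩ := exists_nat_gt (C / |f x|)
  rw [div_lt_iff₀ (abs_pos.2 hne)] at hn
  have hle := hC (n • x)
  rw [hsmul, abs_mul, Nat.abs_cast] at hle
  exact hn.not_ge hle

section CesaroMean

/-- The average of `u` over `{0, …, N - 1}`; it is `0` for `N = 0`. -/
noncomputable def cesaroAvg (u : ℤ → ℝ) (N : ℕ) : ℝ :=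
  (∑ k ∈ Finset.range N, u k) / N

/-- A shift-invariant mean on bounded functions `ℤ → ℝ`: the limit of the averages over
`{0, …, N - 1}` along a nonprincipal ultrafilter. -/
noncomputable def cesaroMean (u : ℤ → ℝ) : ℝ :=
  limUnder (hyperfilter ℕ : Filter ℕ) (cesaroAvg u)

variable {u v : ℤ → ℝ} {C D : ℝ}

theorem abs_cesaroAvg_le (h : ∀ n, |u n| ≤ C) (N : ℕ) : |cesaroAvg u N| ≤ C := by
  have hC : 0 ≤ C := (abs_nonneg _).trans (h 0)
  rw [cesaroAvg, abs_div, Nat.abs_cast]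
  refine div_le_of_le_mul₀ N.cast_nonneg hC ((Finset.abs_sum_le_sum_abs _ _).trans ?_)
  calc ∑ k ∈ Finset.range N, |u k| ≤ ∑ _k ∈ Finset.range N, C := Finset.sum_le_sum fun _ _ ↦ h _
    _ = C * N := by simp [mul_comm]

theorem tendsto_cesaroAvg (h : ∀ n, |u n| ≤ C) :
    Tendsto (cesaroAvg u) (hyperfilter ℕ) (𝓝 (cesaroMean u)) :=
  tendsto_limUnder_of_abs_le _ (abs_cesaroAvg_le h)

theorem abs_cesaroMean_le (h : ∀ n, |u n| ≤ C) : |cesaroMean u| ≤ C :=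
  abs_limUnder_le _ (abs_cesaroAvg_le h)

theorem cesaroMean_const (c : ℝ) : cesaroMean (fun _ ↦ c) = c := by
  refine Tendsto.limUnder_eq (tendsto_const_nhds.congr' ?_)
  filter_upwards [Nat.hyperfilter_le_atTop (eventually_ne_atTop 0)] with N hN
  simp [cesaroAvg, hN]

theorem cesaroMean_add (hu : ∀ n, |u n| ≤ C) (hv : ∀ n, |v n| ≤ D) :
    cesaroMean (fun n ↦ u n + v n) = cesaroMean u + cesaroMean v :=
  (((tendsto_cesaroAvg hu).add (tendsto_cesaroAvg hv)).congr fun N ↦ by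
    simp only [cesaroAvg, Finset.sum_add_distrib, add_div]).limUnder_eq

theorem cesaroMean_sub (hu : ∀ n, |u n| ≤ C) (hv : ∀ n, |v n| ≤ D) :
    cesaroMean (fun n ↦ u n - v n) = cesaroMean u - cesaroMean v :=
  (((tendsto_cesaroAvg hu).sub (tendsto_cesaroAvg hv)).congr fun N ↦ by
    simp only [cesaroAvg, Finset.sum_sub_distrib, sub_div]).limUnder_eq

theorem cesaroMean_comp_add_one (h : ∀ n, |u n| ≤ C) :
    cesaroMean (fun n ↦ u (n + 1)) = cesaroMean u := by
  have hdiff : Tendsto (fun N : ℕ ↦ (u N - u 0) / (N : ℝ)) atTop (𝓝 0) := by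
    refine squeeze_zero_norm (fun N ↦ ?_) (tendsto_const_div_atTop_nhds_zero_nat (C + C))
    rw [Real.norm_eq_abs, abs_div, Nat.abs_cast]
    gcongr
    exact (abs_sub _ _).trans (add_le_add (h _) (h _))
  have hlim := (tendsto_cesaroAvg h).add (hdiff.mono_left Nat.hyperfilter_le_atTop)
  rw [add_zero] at hlim
  refine (hlim.congr fun N ↦ ?_).limUnder_eq
  have htelescope := Finset.sum_range_succ (fun k : ℕ ↦ u k) N
  rw [Finset.sum_range_succ'] at htelescope
  push_cast at htelescope
  rw [cesaroAvg, cesaroAvg, ← add_div]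
  congr 1
  linarith

theorem cesaroMean_comp_add_left (h : ∀ n, |u n| ≤ C) (j : ℤ) :
    cesaroMean (fun n ↦ u (j + n)) = cesaroMean u := by
  have hstep (i : ℤ) : cesaroMean (fun n ↦ u (i + 1 + n)) = cesaroMean (fun n ↦ u (i + n)) := by
    simpa only [add_assoc, add_comm (1 : ℤ)] using
      cesaroMean_comp_add_one (u := fun n ↦ u (i + n)) fun n ↦ h _
  induction j with
  | zero => simp
  | succ i ih => rw [hstep, ih]
  | pred i ih => rw [← ih, ← hstep, sub_add_cancel]

end CesaroMean

/-! ### Homogeneous bounded cocycles -/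

section Cocycles

variable {G : Type*} [Group G] {ω : G → G → ℝ}

namespace IsBounded2Cocycle

theorem exists_primitive_zpow (hω : IsBounded2Cocycle ω) :
    ∃ (φ : G → ℤ → ℝ) (C : ℝ), (∀ g i, |φ g i| ≤ C) ∧
      ∀ g i j, ω (g ^ i) (g ^ j) = φ g j - φ g (i + j) + φ g i := by
  obtain ⟨⟨C, hC⟩, hδ⟩ := hω
  refine ⟨fun g i ↦ cesaroMean fun k ↦ ω (g ^ i) (g ^ k), C,
    fun g i ↦ abs_cesaroMean_le fun k ↦ hC _ _, fun g i j ↦ ?_⟩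
  have hsub (k : ℤ) : |ω (g ^ j) (g ^ k) - ω (g ^ (i + j)) (g ^ k)| ≤ C + C :=
    (abs_sub _ _).trans (add_le_add (hC _ _) (hC _ _))
  beta_reduce
  rw [← cesaroMean_comp_add_left (u := fun k ↦ ω (g ^ i) (g ^ k)) (fun k ↦ hC _ _) j,
    ← cesaroMean_sub (fun k ↦ hC _ _) (fun k ↦ hC _ _),
    ← cesaroMean_add hsub (fun k ↦ hC _ _), ← cesaroMean_const (ω (g ^ i) (g ^ j))]
  congr 1
  funext k
  have hcocycle := hδ (g ^ i) (g ^ j) (g ^ k)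
  rw [← zpow_add, ← zpow_add] at hcocycle
  linarith

theorem exists_sub_coboundary_isHomogeneous (hω : IsBounded2Cocycle ω) :
    ∃ (ψ : G → ℝ) (C : ℝ), (∀ g, |ψ g| ≤ C) ∧
      IsHomogeneous fun g h ↦ ω g h - (ψ h - ψ (g * h) + ψ g) := by
  obtain ⟨φ, C, hC, hφ⟩ := hω.exists_primitive_zpow
  -- `j ↦ φ g (i * j)` and `φ (g ^ i)` are bounded primitives of the same cocycle on `ℤ`.
  have hpow (g : G) (i : ℤ) : φ (g ^ i) 1 = φ g i := by
    have hzero := eq_zero_of_map_add_of_abs_le (f := fun j ↦ φ g (i * j) - φ (g ^ i) j)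
      (fun m n ↦ by
        have h₁ := hφ g (i * m) (i * n)
        have h₂ := hφ (g ^ i) m n
        rw [← zpow_mul, ← zpow_mul] at h₂
        rw [mul_add]
        linarith)
      (fun j ↦ (abs_sub _ _).trans (add_le_add (hC _ _) (hC _ _))) 1
    rw [mul_one] at hzero
    linarith
  refine ⟨fun g ↦ φ g 1, C, fun g ↦ hC g 1, fun g i j ↦ ?_⟩
  simp only [← zpow_add, hpow, hφ, sub_self]

theorem sub_coboundary (hω : IsBounded2Cocycle ω) {ψ : G → ℝ} {C : ℝ} (hψ : ∀ g, |ψ g| ≤ C) :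
    IsBounded2Cocycle fun g h ↦ ω g h - (ψ h - ψ (g * h) + ψ g) := by
  obtain ⟨⟨D, hD⟩, hδ⟩ := hω
  refine ⟨⟨D + (C + C + C), fun g h ↦ ?_⟩, fun g₁ g₂ g₃ ↦ ?_⟩
  · calc |ω g h - (ψ h - ψ (g * h) + ψ g)| ≤ |ω g h| + (|ψ h| + |ψ (g * h)| + |ψ g|) :=
          (abs_sub _ _).trans (by grw [abs_add_le, abs_sub])
      _ ≤ D + (C + C + C) := by gcongr <;> apply_rules
  · have hcocycle := hδ g₁ g₂ g₃
    simp only [mul_assoc]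
    linarith

theorem conj_defect_mul (hω : IsBounded2Cocycle ω) (b x y : G) :
    ω b (x * y) - ω (b * (x * y) * b⁻¹) b = (ω b x - ω (b * x * b⁻¹) b) +
      (ω b y - ω (b * y * b⁻¹) b) - ω x y + ω (b * x * b⁻¹) (b * y * b⁻¹) := by
  have h₁ := hω.2 b x y
  have h₂ := hω.2 (b * x * b⁻¹) (b * y * b⁻¹) b
  have h₃ := hω.2 (b * x * b⁻¹) b y
  rw [conj_mul, inv_mul_cancel_right] at h₂
  rw [inv_mul_cancel_right] at h₃
  linarith

section Homogeneous

variable (hω : IsBounded2Cocycle ω) (hhom : IsHomogeneous ω)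
include hω hhom

theorem apply_conj_left (b a : G) : ω (b * a * b⁻¹) b = ω b a := by
  obtain ⟨C, hC⟩ := hω.1
  have hzero := eq_zero_of_map_add_of_abs_le
    (f := fun n : ℤ ↦ ω b (a ^ n) - ω (b * a ^ n * b⁻¹) b)
    (fun m n ↦ by
      have hmul := hω.conj_defect_mul b (a ^ m) (a ^ n)
      rw [← conj_zpow (i := m), ← conj_zpow (i := n), hhom, hhom, conj_zpow, conj_zpow,
        ← zpow_add] at hmul
      linarith)
    (fun n ↦ (abs_sub _ _).trans (add_le_add (hC _ _) (hC _ _))) 1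
  simp only [zpow_one] at hzero
  linarith

theorem apply_conj_conj (b x y : G) : ω (b * x * b⁻¹) (b * y * b⁻¹) = ω x y := by
  have hmul := hω.conj_defect_mul b x y
  simp only [hω.apply_conj_left hhom] at hmul
  linarith

theorem interchange (x p y q : G) :
    ω x p + ω y q + ω (x * p) (y * q) =
      ω x (p * y * p⁻¹) + ω p q + ω (x * (p * y * p⁻¹)) (p * q) := by
  have h₁ := hω.2 x p (y * q)
  have h₂ := hω.2 p y q
  have h₃ := hω.2 (p * y * p⁻¹) p q
  have h₄ := hω.2 x (p * y * p⁻¹) (p * q)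
  have hassoc : p * y * p⁻¹ * (p * q) = p * (y * q) := by group
  rw [inv_mul_cancel_right, hω.apply_conj_left hhom] at h₃
  rw [hassoc] at h₄
  linarith

theorem apply_eq_zero_of_commute {f h : G} (hc : Commute f h) : ω f h = 0 := by
  obtain ⟨C, hC⟩ := hω.1
  have hzero := eq_zero_of_map_add_of_abs_le (f := fun n : ℤ ↦ ω (f ^ n) (h ^ n))
    (fun m n ↦ by
      have hswap := hω.interchange hhom (f ^ m) (h ^ m) (f ^ n) (h ^ n)
      have hconj : h ^ m * f ^ n * (h ^ m)⁻¹ = f ^ n := by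
        rw [(hc.symm.zpow_zpow m n).eq, mul_inv_cancel_right]
      rw [hconj, ← zpow_add, ← zpow_add, ← hc.mul_zpow, ← hc.mul_zpow, hhom, hhom, hhom] at hswap
      linarith)
    (fun n ↦ hC _ _) 1
  simpa using hzero

end Homogeneous

theorem apply_eq_of_mul_eq (hω : IsBounded2Cocycle ω) {A B : Subgroup G}
    (hA : ∀ f ∈ A, ∀ g ∈ A, ω f g = 0) (hB : ∀ f ∈ B, ∀ g ∈ B, ω f g = 0)
    {a a₁ b b₁ : G} (ha : a ∈ A) (ha₁ : a₁ ∈ A) (hb : b ∈ B) (hb₁ : b₁ ∈ B)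
    (h : a * b = a₁ * b₁) : ω a b = ω a₁ b₁ := by
  have hk : a⁻¹ * a₁ = b * b₁⁻¹ := by
    rw [inv_mul_eq_iff_eq_mul, ← mul_assoc, eq_mul_inv_iff_mul_eq, h]
  have hcocycle := hω.2 a (a⁻¹ * a₁) b₁
  rw [mul_inv_cancel_left, hA _ ha _ (A.mul_mem (A.inv_mem ha) ha₁), hk, inv_mul_cancel_right,
    hB _ (B.mul_mem hb (B.inv_mem hb₁)) _ hb₁] at hcocycle
  linarith

theorem exists_bounded_apply_mul_eq (hω : IsBounded2Cocycle ω) {A B : Subgroup G}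
    (hA : ∀ f ∈ A, ∀ g ∈ A, ω f g = 0) (hB : ∀ f ∈ B, ∀ g ∈ B, ω f g = 0)
    {C : ℝ} (hC : ∀ g h, |ω g h| ≤ C) :
    ∃ φ : G → ℝ, (∀ g, |φ g| ≤ C) ∧ ∀ a ∈ A, ∀ b ∈ B, φ (a * b) = ω a b := by
  have hvalue (g : G) : ∃ c : ℝ, |c| ≤ C ∧ ∀ a ∈ A, ∀ b ∈ B, a * b = g → c = ω a b := by
    by_cases h : ∃ a ∈ A, ∃ b ∈ B, a * b = g
    · obtain ⟨a₁, ha₁, b₁, hb₁, rfl⟩ := h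
      exact ⟨ω a₁ b₁, hC _ _, fun a ha b hb hab ↦
        hω.apply_eq_of_mul_eq hA hB ha₁ ha hb₁ hb hab.symm⟩
    · exact ⟨0, by simpa using (abs_nonneg _).trans (hC 1 1), fun a ha b hb hab ↦
        absurd ⟨a, ha, b, hb, hab⟩ h⟩
  choose φ hφ hmul using hvalue
  exact ⟨φ, hφ, fun a ha b hb ↦ hmul _ a ha b hb rfl⟩

end IsBounded2Cocycle

/-- Every homogeneous bounded 2-cocycle of the ambient group vanishes on pairs of elements
of `K`. -/
def HomogeneousCocyclesVanishOn (K : Set G) : Prop :=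
  ∀ ω : G → G → ℝ, IsBounded2Cocycle ω → IsHomogeneous ω → ∀ f ∈ K, ∀ g ∈ K, ω f g = 0

-- If `t` moves the supports of `f` and `g` off themselves, then replacing `f` and `g` by
-- `f * (t * f * t⁻¹)` and `g * (t * g * t⁻¹)` doubles `ω f g`, which iterated contradicts
-- boundedness.
theorem homogeneousCocyclesVanishOn_of_doubling (K : Set G)
    (hK : ∀ f ∈ K, ∀ g ∈ K, ∃ t : G,
      (∀ x ∈ ({f, g} : Set G), ∀ y ∈ ({f, g} : Set G), Commute x (t * y * t⁻¹)) ∧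
      ∀ x ∈ ({f, g} : Set G), x * (t * x * t⁻¹) ∈ K) :
    HomogeneousCocyclesVanishOn K := by
  intro ω hω hhom
  obtain ⟨C, hC⟩ := hω.1
  have hdouble : ∀ f ∈ K, ∀ g ∈ K, ∃ f' ∈ K, ∃ g' ∈ K, ω f' g' = 2 * ω f g := by
    intro f hf g hg
    obtain ⟨t, hcomm, hmem⟩ := hK f hf g hg
    refine ⟨_, hmem f (by simp), _, hmem g (by simp), ?_⟩
    have hff := hcomm f (by simp) f (by simp)
    have hfg := hcomm f (by simp) g (by simp)
    have hgf := hcomm g (by simp) f (by simp)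
    have hgg := hcomm g (by simp) g (by simp)
    have hswap := hω.interchange hhom f (t * f * t⁻¹) g (t * g * t⁻¹)
    rw [← hgf.eq, mul_inv_cancel_right, hω.apply_eq_zero_of_commute hhom hff,
      hω.apply_eq_zero_of_commute hhom hgg, hω.apply_conj_conj hhom,
      hω.apply_eq_zero_of_commute hhom ((hff.mul_right hfg).mul_left (hgf.mul_right hgg))] at hswap
    linarith
  have hpow (n : ℕ) : ∀ f ∈ K, ∀ g ∈ K, |ω f g| * 2 ^ n ≤ C := by
    induction n with
    | zero => simpa using fun f _ g _ ↦ hC f g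
    | succ n ih =>
      intro f hf g hg
      obtain ⟨f', hf', g', hg', h⟩ := hdouble f hf g hg
      have hle := ih f' hf' g' hg'
      rw [h, abs_mul, abs_two] at hle
      rw [pow_succ]
      linarith
  intro f hf g hg
  by_contra hne
  obtain ⟨n, hn⟩ := pow_unbounded_of_one_lt (C / |ω f g|) (one_lt_two : (1 : ℝ) < 2)
  rw [div_lt_iff₀' (abs_pos.2 hne)] at hn
  exact hn.not_ge (hpow n f hf g hg)

theorem IsBounded2Cocycle.isCoboundaryOfBounded_of_eventually_decomposition
    (hω : IsBounded2Cocycle ω) (hhom : IsHomogeneous ω)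
    {ι : Type*} {l : Filter ι} [l.NeBot] {A B : ι → Subgroup G}
    (hA : ∀ n, ∀ f ∈ A n, ∀ g ∈ A n, ω f g = 0) (hB : ∀ n, ∀ f ∈ B n, ∀ g ∈ B n, ω f g = 0)
    (hdec : ∀ f g : G, ∀ᶠ n in l, ∃ a ∈ A n, ∃ b ∈ B n, ∃ a' ∈ A n, ∃ b' ∈ B n,
      f = a * b ∧ g = a' * b' ∧ b * a' * b⁻¹ ∈ A n) :
    IsCoboundaryOfBounded ω := by
  obtain ⟨C, hC⟩ := hω.1
  choose φ hφC hφ using fun n ↦ hω.exists_bounded_apply_mul_eq (hA n) (hB n) hC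
  have hlim (g : G) : Tendsto (φ · g) (Ultrafilter.of l)
      (𝓝 (limUnder (Ultrafilter.of l : Filter ι) (φ · g))) :=
    tendsto_limUnder_of_abs_le _ fun n ↦ hφC n g
  refine ⟨fun g ↦ -limUnder (Ultrafilter.of l : Filter ι) (φ · g),
    ⟨C, fun g ↦ (abs_neg _).trans_le (abs_limUnder_le _ fun n ↦ hφC n g)⟩, fun f g ↦ ?_⟩
  have hδ : ∀ᶠ n in l, ω f g = φ n (f * g) - φ n f - φ n g := by
    filter_upwards [hdec f g]
    rintro n ⟨a, ha, b, hb, a', ha', b', hb', rfl, rfl, hab⟩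
    have hregroup : a * b * (a' * b') = a * (b * a' * b⁻¹) * (b * b') := by group
    have hswap := hω.interchange hhom a b a' b'
    rw [hA n _ ha _ hab, hB n _ hb _ hb'] at hswap
    rw [hregroup, hφ n _ ((A n).mul_mem ha hab) _ ((B n).mul_mem hb hb'), hφ n _ ha _ hb,
      hφ n _ ha' _ hb']
    linarith
  rw [tendsto_nhds_unique (tendsto_const_nhds.congr' (Ultrafilter.of_le l hδ))
    (((hlim (f * g)).sub (hlim f)).sub (hlim g))]
  ring

theorem is2BoundedlyAcyclic_of_eventually_decomposition
    {ι : Type*} {l : Filter ι} [l.NeBot] {A B : ι → Subgroup G}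
    (hA : ∀ n, HomogeneousCocyclesVanishOn (A n : Set G))
    (hB : ∀ n, HomogeneousCocyclesVanishOn (B n : Set G))
    (hdec : ∀ f g : G, ∀ᶠ n in l, ∃ a ∈ A n, ∃ b ∈ B n, ∃ a' ∈ A n, ∃ b' ∈ B n,
      f = a * b ∧ g = a' * b' ∧ b * a' * b⁻¹ ∈ A n) :
    Is2BoundedlyAcyclic G := by
  intro ω hω
  obtain ⟨ψ, C, hψ, hhom⟩ := hω.exists_sub_coboundary_isHomogeneous
  have hω' := hω.sub_coboundary hψ
  obtain ⟨φ, ⟨D, hD⟩, hφ⟩ := hω'.isCoboundaryOfBounded_of_eventually_decomposition hhom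
    (fun n ↦ hA n _ hω' hhom) (fun n ↦ hB n _ hω' hhom) hdec
  refine ⟨fun g ↦ φ g + ψ g,
    ⟨D + C, fun g ↦ (abs_add_le _ _).trans (add_le_add (hD g) (hψ g))⟩, fun g h ↦ ?_⟩
  linarith [hφ g h]

end Cocycles

/-! ### Supports and bumps -/

section RigidStabilizer

variable {α : Type*} [LE α] {f g : α ≃o α} {s t : Set α} {x y : α}

/-- The rigid stabilizer of `s`: the automorphisms supported in `s`, i.e. fixing every point
outside `s`. -/
def rigidStabilizer (s : Set α) : Subgroup (α ≃o α) :=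
  fixingSubgroup (α ≃o α) sᶜ

theorem mem_rigidStabilizer : f ∈ rigidStabilizer s ↔ ∀ x ∉ s, f x = x :=
  mem_fixingSubgroup_iff _

theorem rigidStabilizer_mono (h : s ⊆ t) : rigidStabilizer s ≤ rigidStabilizer t :=
  fixingSubgroup_antitone _ _ (Set.compl_subset_compl.2 h)

theorem inv_apply_eq_of_apply_eq (h : f x = y) : f⁻¹ y = x := by
  rw [← h, RelIso.inv_apply_self]

theorem mem_of_apply_ne (hf : f ∈ rigidStabilizer s) (hx : f x ≠ x) : x ∈ s :=
  not_imp_comm.1 (mem_rigidStabilizer.1 hf x) hx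

theorem apply_mem_of_mem_rigidStabilizer (hf : f ∈ rigidStabilizer s) (hx : x ∈ s) : f x ∈ s := by
  by_contra h
  have : f x = x := f.injective (mem_rigidStabilizer.1 hf _ h)
  exact h (this.symm ▸ hx)

theorem conj_mem_rigidStabilizer (hf : f ∈ rigidStabilizer s) (h : ∀ x ∈ s, g x ∈ t) :
    g * f * g⁻¹ ∈ rigidStabilizer t := by
  refine mem_rigidStabilizer.2 fun x hx ↦ ?_
  have hx' : g⁻¹ x ∉ s := fun hs ↦ hx (by simpa only [RelIso.apply_inv_self] using h _ hs)
  rw [RelIso.mul_apply, RelIso.mul_apply, mem_rigidStabilizer.1 hf _ hx', RelIso.apply_inv_self]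

theorem commute_of_mem_rigidStabilizer (hf : f ∈ rigidStabilizer s) (hg : g ∈ rigidStabilizer t)
    (hst : Disjoint s t) : Commute f g := by
  refine RelIso.ext fun x ↦ ?_
  rw [RelIso.mul_apply, RelIso.mul_apply]
  by_cases hs : x ∈ s
  · have hfs := apply_mem_of_mem_rigidStabilizer hf hs
    rw [mem_rigidStabilizer.1 hg x (hst.notMem_of_mem_left hs),
      mem_rigidStabilizer.1 hg _ (hst.notMem_of_mem_left hfs)]
  have hfx := mem_rigidStabilizer.1 hf x hs
  by_cases ht : x ∈ t
  · have hgt := apply_mem_of_mem_rigidStabilizer hg ht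
    rw [hfx, mem_rigidStabilizer.1 hf _ (hst.notMem_of_mem_right hgt)]
  · rw [hfx, mem_rigidStabilizer.1 hg x ht, hfx]

theorem mem_rigidStabilizer_Ioo {α : Type*} [LinearOrder α] {f : α ≃o α} {a b : α}
    (hf : f ∈ rigidStabilizer (Set.Icc a b)) : f ∈ rigidStabilizer (Set.Ioo a b) := by
  refine mem_rigidStabilizer.2 fun x hx ↦ ?_
  by_contra hne
  have hxs := mem_of_apply_ne hf hne
  have hfx := apply_mem_of_mem_rigidStabilizer hf hxs
  have hfx' := apply_mem_of_mem_rigidStabilizer (inv_mem hf) hxs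
  have hle {y : α} (h : x ≤ f⁻¹ y) : f x ≤ y := by
    simpa only [RelIso.apply_inv_self] using f.monotone h
  have hge {y : α} (h : f⁻¹ y ≤ x) : y ≤ f x := by
    simpa only [RelIso.apply_inv_self] using f.monotone h
  rcases hxs.1.eq_or_lt with rfl | ha
  · exact hne ((hle hfx'.1).antisymm hfx.1)
  rcases hxs.2.eq_or_lt with rfl | hb
  · exact hne (hfx.2.antisymm (hge hfx'.2))
  · exact hx ⟨ha, hb⟩

end RigidStabilizer

/-- If `f` has no fixed point in `(p, P)`, its iterates push `a` beyond any `b < P`, since the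
supremum of the orbit would otherwise be a fixed point. -/
theorem exists_lt_pow_apply (f : ℝ ≃o ℝ) {p P a b : ℝ} (hf : ∀ x, p < x → x < P → x < f x)
    (ha : p < a) (hb : b < P) : ∃ n : ℕ, b < (f ^ n) a := by
  by_contra! hcon
  set l := ⨆ n : ℕ, (f ^ n) a
  have hbdd : BddAbove (Set.range fun n : ℕ ↦ (f ^ n) a) := ⟨b, by rintro _ ⟨n, rfl⟩; exact hcon n⟩
  have hal : a ≤ l := le_ciSup hbdd 0
  have hlb : l ≤ b := ciSup_le hcon
  have hlt : f⁻¹ l < l := by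
    simpa only [RelIso.inv_apply_self] using
      f⁻¹.strictMono (hf l (ha.trans_le hal) (hlb.trans_lt hb))
  obtain ⟨n, hn⟩ := exists_lt_of_lt_ciSup hlt
  have hn' : l < (f ^ (n + 1)) a := by
    simpa only [pow_succ', RelIso.mul_apply, RelIso.apply_inv_self] using f.strictMono hn
  exact (le_ciSup hbdd (n + 1)).not_gt hn'

section Bump

private theorem strictMono_bump (p q : ℝ) :
    StrictMono fun x : ℝ ↦ max x (min (2 * x - p) (min (x + q / 4) (x / 2 + (p + q) / 2))) :=
  fun a b h ↦ max_lt_max h (min_lt_min (by linarith) (min_lt_min (by linarith) (by linarith)))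

private theorem surjective_bump (p q : ℝ) :
    Function.Surjective
      fun x : ℝ ↦ max x (min (2 * x - p) (min (x + q / 4) (x / 2 + (p + q) / 2))) := by
  refine Continuous.surjective (by fun_prop)
    (tendsto_atTop_mono (fun x ↦ le_max_left _ _) tendsto_id) ?_
  refine tendsto_atBot_mono (fun x ↦ ?_) (tendsto_atBot_add_const_right _ |q / 4| tendsto_id)
  refine max_le ((le_add_iff_nonneg_right x).2 (abs_nonneg _))
    ((min_le_right _ _).trans ((min_le_left _ _).trans ?_))
  exact (add_le_add_iff_left x).2 (le_abs_self _)

/-- The piecewise linear bump on `(p, p + q)` with slopes `2`, `1`, `1 / 2` and breakpoints `p`,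
`p + q/4`, `p + q/2`, `p + q`; it is the identity if `q ≤ 0`. -/
noncomputable def bump (p q : ℝ) : ℝ ≃o ℝ :=
  (strictMono_bump p q).orderIsoOfSurjective _ (surjective_bump p q)

variable {p q x : ℝ}

theorem bump_apply (p q x : ℝ) :
    bump p q x = max x (min (2 * x - p) (min (x + q / 4) (x / 2 + (p + q) / 2))) := rfl

theorem bump_apply_of_le (h : x ≤ p) : bump p q x = x := by
  rw [bump_apply]; simp only [max_def, min_def]; split_ifs <;> linarith

theorem bump_apply_of_add_le (h : p + q ≤ x) : bump p q x = x := by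
  rw [bump_apply]; simp only [max_def, min_def]; split_ifs <;> linarith

theorem bump_apply_first (h : p ≤ x) (h' : x ≤ p + q / 4) : bump p q x = 2 * x - p := by
  rw [bump_apply]; simp only [max_def, min_def]; split_ifs <;> linarith

theorem bump_apply_second (h : p + q / 4 ≤ x) (h' : x ≤ p + q / 2) :
    bump p q x = x + q / 4 := by
  rw [bump_apply]; simp only [max_def, min_def]; split_ifs <;> linarith

theorem bump_apply_third (h : p + q / 2 ≤ x) (h' : x ≤ p + q) :
    bump p q x = x / 2 + (p + q) / 2 := by
  rw [bump_apply]; simp only [max_def, min_def]; split_ifs <;> linarith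

theorem bump_add (p q c x : ℝ) : bump (p + c) q (x + c) = bump p q x + c := by
  simp only [bump_apply, max_def, min_def]; split_ifs <;> linarith

theorem bump_reflect (hq : 0 < q) (c x : ℝ) : bump (c - p - q) q (c - bump p q x) = c - x := by
  simp only [bump_apply, max_def, min_def]; split_ifs <;> linarith

theorem lt_bump_apply (h : p < x) (h' : x < p + q) : x < bump p q x := by
  rw [bump_apply]; simp only [max_def, min_def]; split_ifs <;> linarith

theorem bump_mem_rigidStabilizer (p q : ℝ) : bump p q ∈ rigidStabilizer (Set.Ioo p (p + q)) := by
  refine mem_rigidStabilizer.2 fun x hx ↦ ?_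
  rcases le_or_gt x p with h | h
  · exact bump_apply_of_le h
  · exact bump_apply_of_add_le (not_lt.1 fun h' ↦ hx ⟨h, h'⟩)

end Bump

/-! ### Elements of Thompson's group -/

namespace IsDyadic

variable {x y : ℝ}

theorem add (hx : IsDyadic x) (hy : IsDyadic y) : IsDyadic (x + y) := by
  obtain ⟨a, n, rfl⟩ := hx
  obtain ⟨b, m, rfl⟩ := hy
  refine ⟨a * 2 ^ m + b * 2 ^ n, n + m, ?_⟩
  push_cast
  rw [pow_add]
  field_simp

theorem neg (hx : IsDyadic x) : IsDyadic (-x) := by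
  obtain ⟨a, n, rfl⟩ := hx
  exact ⟨-a, n, by push_cast; ring⟩

theorem sub (hx : IsDyadic x) (hy : IsDyadic y) : IsDyadic (x - y) :=
  sub_eq_add_neg x y ▸ hx.add hy.neg

theorem div_two_pow (hx : IsDyadic x) (k : ℕ) : IsDyadic (x / 2 ^ k) := by
  obtain ⟨a, n, rfl⟩ := hx
  exact ⟨a, n + k, by rw [pow_add, div_div]⟩

theorem intCast (a : ℤ) : IsDyadic a := ⟨a, 0, by simp⟩

end IsDyadic

theorem exists_isDyadic_btwn {a b : ℝ} (h : a < b) : ∃ d, IsDyadic d ∧ a < d ∧ d < b := by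
  obtain ⟨n, hn⟩ := pow_unbounded_of_one_lt (1 / (b - a)) (one_lt_two : (1 : ℝ) < 2)
  have hpos : (0 : ℝ) < 2 ^ n := by positivity
  rw [div_lt_iff₀ (by linarith)] at hn
  refine ⟨((⌊a * 2 ^ n⌋ + 1 : ℤ) : ℝ) / 2 ^ n, ⟨_, n, rfl⟩, ?_, ?_⟩
  · rw [lt_div_iff₀ hpos]
    push_cast
    exact Int.lt_floor_add_one _
  · rw [div_lt_iff₀ hpos]
    push_cast
    linarith [Int.floor_le (a * 2 ^ n)]

section Bump

variable {p q x : ℝ}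

theorem inThompsonF_bump (hq : 0 < q) (dp : IsDyadic p) (dq : IsDyadic q) (hp : 0 < p)
    (hpq : p + q < 1) : InThompsonF (bump p q) := by
  refine ⟨fun x hx ↦ mem_rigidStabilizer.1 (bump_mem_rigidStabilizer p q) x fun h ↦
    hx ⟨by linarith [h.1], by linarith [h.2]⟩,
    5, ![0, p, p + q / 4, p + q / 2, p + q, 1], rfl, rfl, ?_, ?_, ?_⟩
  · rw [Fin.strictMono_iff_lt_succ]
    intro i
    fin_cases i <;> simp <;> linarith
  · intro i
    fin_cases i
    · simpa using IsDyadic.intCast 0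
    · exact dp
    · exact dp.add (by simpa [show (2 : ℝ) ^ 2 = 4 by norm_num] using dq.div_two_pow 2)
    · exact dp.add (by simpa using dq.div_two_pow 1)
    · exact dp.add dq
    · simpa using IsDyadic.intCast 1
  · intro i
    fin_cases i
    · exact ⟨0, 0, fun t (ht : _ ∧ t ≤ p) ↦ by rw [bump_apply_of_le ht.2]; simp⟩
    · exact ⟨1, -p, fun t (ht : p ≤ t ∧ _) ↦ by rw [bump_apply_first ht.1 ht.2]; simp; ring⟩
    · exact ⟨0, q / 4, fun t ht ↦ by rw [bump_apply_second ht.1 ht.2]; simp⟩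
    · exact ⟨-1, (p + q) / 2, fun t ht ↦ by rw [bump_apply_third ht.1 ht.2]; simp; ring⟩
    · exact ⟨0, 0, fun t ht ↦ by rw [bump_apply_of_add_le ht.1]; simp⟩

theorem inH_bump (hq : 0 < q) (dp : IsDyadic p) (dq : IsDyadic q) (hp : 0 < p)
    (hpq : p + q < 1) : InH (bump p q) := by
  refine ⟨inThompsonF_bump hq dp dq hp hpq, 0, min p (1 - (p + q)), lt_min hp (by linarith),
    fun t ht ↦ ?_, fun t ht ↦ ?_⟩
  · rw [bump_apply_of_le (ht.2.trans (min_le_left _ _)), zpow_zero, one_mul]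
  · rw [bump_apply_of_add_le (by linarith [ht.1, min_le_right p (1 - (p + q))])]
    ring

/-- An element of `H` which has slope `2` at both ends of `[0, 1]` and is trivial on the middle. -/
noncomputable def endBump : ℝ ≃o ℝ :=
  bump 0 (1 / 4) * (bump (3 / 4) (1 / 4))⁻¹

theorem endBump_apply_left (hx : x ≤ 3 / 4) : endBump x = bump 0 (1 / 4) x := by
  rw [endBump, RelIso.mul_apply, inv_apply_eq_of_apply_eq (bump_apply_of_le hx)]

theorem endBump_bump_apply_right (hx : 1 / 4 ≤ x) : endBump (bump (3 / 4) (1 / 4) x) = x := by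
  rw [endBump, RelIso.mul_apply, RelIso.inv_apply_self, bump_apply_of_add_le (by linarith)]

theorem endBump_apply_middle (hx : x ∈ Set.Icc (1 / 4 : ℝ) (3 / 4)) : endBump x = x := by
  rw [endBump_apply_left hx.2, bump_apply_of_add_le (by linarith [hx.1])]

theorem endBump_apply_near_zero (h0 : 0 ≤ x) (hx : x ≤ 1 / 16) : endBump x = 2 * x := by
  rw [endBump_apply_left (by linarith), bump_apply_first h0 (by linarith), sub_zero]

theorem endBump_apply_near_one (h0 : 15 / 16 ≤ x) (hx : x ≤ 1) : endBump x = 2 * x - 1 := by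
  have h : bump (3 / 4) (1 / 4) (2 * x - 1) = x := by
    rw [bump_apply_third (by linarith) (by linarith)]; ring
  simpa only [h] using endBump_bump_apply_right (x := 2 * x - 1) (by linarith)

theorem endBump_mem_rigidStabilizer : endBump ∈ rigidStabilizer (Set.Icc (0 : ℝ) 1) := by
  refine mul_mem (rigidStabilizer_mono ?_ (bump_mem_rigidStabilizer _ _))
    (inv_mem (rigidStabilizer_mono ?_ (bump_mem_rigidStabilizer _ _))) <;>
  exact Set.Ioo_subset_Icc_self.trans (Set.Icc_subset_Icc (by norm_num) (by norm_num))

theorem inThompsonF_endBump : InThompsonF endBump := by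
  have dyadic (a : ℤ) (b : ℕ) (x : ℝ) (h : x = a / 2 ^ b) : IsDyadic x := ⟨a, b, h⟩
  have right {s t : ℝ} (hs : 1 / 4 ≤ s) (h : bump (3 / 4) (1 / 4) s = t) : endBump t = s :=
    h ▸ endBump_bump_apply_right hs
  refine ⟨mem_rigidStabilizer.1 endBump_mem_rigidStabilizer,
    7, ![0, 1 / 16, 1 / 8, 1 / 4, 3 / 4, 7 / 8, 15 / 16, 1], rfl, rfl, ?_, ?_, ?_⟩
  · rw [Fin.strictMono_iff_lt_succ]
    intro i
    fin_cases i <;> simp <;> norm_num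
  · intro i
    fin_cases i
    · exact dyadic 0 0 _ (by simp)
    · exact dyadic 1 4 _ (by simp; norm_num)
    · exact dyadic 1 3 _ (by simp; norm_num)
    · exact dyadic 1 2 _ (by simp; norm_num)
    · exact dyadic 3 2 _ (by simp; norm_num)
    · exact dyadic 7 3 _ (by simp; norm_num)
    · exact dyadic 15 4 _ (by simp; norm_num)
    · exact dyadic 1 0 _ (by simp)
  · intro i
    fin_cases i
    · exact ⟨1, 0, fun t ht ↦ by rw [endBump_apply_near_zero ht.1 ht.2]; simp⟩
    · refine ⟨0, 1 / 16, fun t ⟨(h1 : 1 / 16 ≤ t), (h2 : t ≤ 1 / 8)⟩ ↦ ?_⟩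
      rw [endBump_apply_left (by linarith), bump_apply_second (by linarith) (by linarith)]
      simp; ring
    · refine ⟨-1, 1 / 8, fun t ⟨(h1 : 1 / 8 ≤ t), (h2 : t ≤ 1 / 4)⟩ ↦ ?_⟩
      rw [endBump_apply_left (by linarith), bump_apply_third (by linarith) (by linarith)]
      simp; ring
    · exact ⟨0, 0, fun t ht ↦ by rw [endBump_apply_middle ht]; simp⟩
    · refine ⟨-1, 3 / 8, fun t ⟨(h1 : 3 / 4 ≤ t), (h2 : t ≤ 7 / 8)⟩ ↦ right ?_ ?_⟩
      · simp; linarith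
      · rw [bump_apply_first (by simp; linarith) (by simp; linarith)]; simp; ring
    · refine ⟨0, -1 / 16, fun t ⟨(h1 : 7 / 8 ≤ t), (h2 : t ≤ 15 / 16)⟩ ↦ right ?_ ?_⟩
      · simp; linarith
      · rw [bump_apply_second (by simp; linarith) (by simp; linarith)]; simp; ring
    · exact ⟨1, -1, fun t ht ↦ by rw [endBump_apply_near_one ht.1 ht.2]; simp; ring⟩

theorem inH_endBump : InH endBump := by
  refine ⟨inThompsonF_endBump, 1, 1 / 16, by norm_num, fun t ht ↦ ?_, fun t ht ↦ ?_⟩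
  · rw [endBump_apply_near_zero ht.1 ht.2, zpow_one]
  · rw [endBump_apply_near_one (by linarith [ht.1]) ht.2, zpow_one]; ring

end Bump

/-! ### Compactly transitive groups of the interval -/

section CompactlyTransitive

/-- `K` consists of automorphisms supported in compact subsets of `(0, 1)`, and any compact
subset of `(0, 1)` can be moved by `K` into any nonempty open subset of `(0, 1)`. -/
structure IsCompactlyTransitive (K : Subgroup (ℝ ≃o ℝ)) : Prop where
  exists_mem_rigidStabilizer :
    ∀ f ∈ K, ∃ ε > 0, ε < 1 / 2 ∧ f ∈ rigidStabilizer (Set.Icc ε (1 - ε))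
  exists_compress : ∀ {a b c d : ℝ}, 0 < a → a ≤ b → b < 1 → 0 ≤ c → c < d → d ≤ 1 →
    ∃ t ∈ K, c < t a ∧ t b < d

/-- `K` consists of automorphisms supported in compact subsets of `(0, 1)` and contains every bump
supported in a dyadic subinterval of `(0, 1)`. -/
structure IsDyadicBumpGroup (K : Subgroup (ℝ ≃o ℝ)) : Prop where
  exists_mem_rigidStabilizer :
    ∀ f ∈ K, ∃ ε > 0, ε < 1 / 2 ∧ f ∈ rigidStabilizer (Set.Icc ε (1 - ε))
  bump_mem : ∀ {p q : ℝ}, IsDyadic p → IsDyadic q → 0 < p → 0 < q → p + q < 1 → bump p q ∈ K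

variable {H K : Subgroup (ℝ ≃o ℝ)}

namespace IsDyadicBumpGroup

variable (hK : IsDyadicBumpGroup K)
include hK

theorem exists_push_up {p P a b : ℝ} (dp : IsDyadic p) (dP : IsDyadic P) (hp : 0 < p) (hP : P < 1)
    (ha : p < a) (hab : a ≤ b) (hb : b < P) :
    ∃ t ∈ K, t ∈ rigidStabilizer (Set.Ioo p P) ∧ b < t a := by
  obtain ⟨n, hn⟩ := exists_lt_pow_apply (bump p (P - p))
    (fun x hx hx' ↦ lt_bump_apply hx (by linarith)) ha hb
  have hmem : bump p (P - p) ∈ K := hK.bump_mem dp (dP.sub dp) hp (by linarith) (by linarith)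
  have hsupp := bump_mem_rigidStabilizer p (P - p)
  rw [add_sub_cancel] at hsupp
  exact ⟨_, pow_mem hmem n, pow_mem hsupp n, hn⟩

theorem isCompactlyTransitive : IsCompactlyTransitive K where
  exists_mem_rigidStabilizer := hK.exists_mem_rigidStabilizer
  exists_compress := by
    -- First push `b` down below a point `m` of `(c, d)`, then `a` up above `m`, fixing `d`.
    intro a b c d ha hab hb hc hcd hd
    obtain ⟨m, hcm, hmd⟩ := exists_between hcd
    obtain ⟨p, dp, hp, hpa⟩ := exists_isDyadic_btwn (lt_min ha (hc.trans_lt hcm))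
    obtain ⟨P, dP, hbP, hP⟩ := exists_isDyadic_btwn (max_lt hb (hmd.trans_le hd))
    obtain ⟨hpa, hpm⟩ := lt_min_iff.1 hpa
    obtain ⟨hbP, hmP⟩ := max_lt_iff.1 hbP
    obtain ⟨p', hpp', hp'⟩ := exists_between hpm
    obtain ⟨s, hs, hsupp, hsb⟩ := hK.exists_push_up dp dP hp hP hpp'
      (le_max_left p' b) (max_lt (hp'.trans hmP) hbP)
    have hbm : s⁻¹ b < m := by
      have := s⁻¹.strictMono (lt_of_le_of_lt (le_max_right p' b) hsb)
      rw [RelIso.inv_apply_self] at this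
      exact this.trans hp'
    have hsa : p < s⁻¹ a :=
      (apply_mem_of_mem_rigidStabilizer (inv_mem hsupp) ⟨hpa, hab.trans_lt hbP⟩).1
    obtain ⟨r, dr, hr, hra⟩ := exists_isDyadic_btwn (hp.trans hsa)
    obtain ⟨R, dR, hmR, hRd⟩ := exists_isDyadic_btwn hmd
    have hsab : s⁻¹ a ≤ s⁻¹ b := s⁻¹.monotone hab
    obtain ⟨t, ht, htsupp, hta⟩ := hK.exists_push_up dr dR hr
      (hRd.trans_le hd) hra (hsab.trans hbm.le) hmR
    refine ⟨t * s⁻¹, mul_mem ht (inv_mem hs), hcm.trans hta, lt_trans ?_ hRd⟩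
    exact (apply_mem_of_mem_rigidStabilizer htsupp ⟨hra.trans_le hsab, hbm.trans hmR⟩).2

end IsDyadicBumpGroup

/-- The elements of `H` that are the identity near `0` and `1`. -/
def compactSupportSubgroup (H : Subgroup (ℝ ≃o ℝ)) : Subgroup (ℝ ≃o ℝ) where
  carrier := {ν | ν ∈ H ∧ ∃ ε > 0, ν ∈ rigidStabilizer (Set.Icc ε (1 - ε))}
  mul_mem' := by
    rintro a b ⟨ha, ε, hε, h⟩ ⟨hb, ε', hε', h'⟩
    refine ⟨mul_mem ha hb, min ε ε', lt_min hε hε', mul_mem (rigidStabilizer_mono ?_ h)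
      (rigidStabilizer_mono ?_ h')⟩
    · exact Set.Icc_subset_Icc (min_le_left _ _) (sub_le_sub_left (min_le_left _ _) _)
    · exact Set.Icc_subset_Icc (min_le_right _ _) (sub_le_sub_left (min_le_right _ _) _)
  one_mem' := ⟨one_mem H, 1, one_pos, one_mem _⟩
  inv_mem' := fun ⟨ha, ε, hε, h⟩ ↦ ⟨inv_mem ha, ε, hε, inv_mem h⟩

theorem compactSupportSubgroup_le (H : Subgroup (ℝ ≃o ℝ)) : compactSupportSubgroup H ≤ H :=
  fun _ h ↦ h.1

theorem isDyadicBumpGroup_compactSupportSubgroup (hH : ∀ f : ℝ ≃o ℝ, f ∈ H ↔ InH f) :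
    IsDyadicBumpGroup (compactSupportSubgroup H) where
  exists_mem_rigidStabilizer := by
    rintro f ⟨-, ε, hε, h⟩
    refine ⟨min ε (1 / 4), lt_min hε (by norm_num), (min_le_right _ _).trans_lt (by norm_num),
      rigidStabilizer_mono ?_ h⟩
    exact Set.Icc_subset_Icc (min_le_left _ _) (sub_le_sub_left (min_le_left _ _) _)
  bump_mem {p q} dp dq hp hq hpq := by
    refine ⟨(hH _).2 (inH_bump hq dp dq hp hpq), min p (1 - (p + q)), lt_min hp (by linarith),
      rigidStabilizer_mono (fun x hx ↦ ?_) (bump_mem_rigidStabilizer _ _)⟩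
    exact ⟨(min_le_left _ _).trans hx.1.le, by linarith [min_le_right p (1 - (p + q)), hx.2]⟩

theorem commutator_le_self {G : Type*} [Group G] (K : Subgroup G) : ⁅K, K⁆ ≤ K :=
  Subgroup.commutator_le.2 fun _ ha _ hb ↦
    mul_mem (mul_mem (mul_mem ha hb) (inv_mem ha)) (inv_mem hb)

theorem conj_mem_commutator {G : Type*} [Group G] {K : Subgroup G} {t d : G} (ht : t ∈ K)
    (hd : d ∈ ⁅K, K⁆) : t * d * t⁻¹ ∈ ⁅K, K⁆ := by
  have h : t * d * t⁻¹ = ⁅t, d⁆ * d := by rw [commutatorElement_def]; group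
  exact h ▸ mul_mem (Subgroup.commutator_mem_commutator ht (commutator_le_self K hd)) hd

theorem commutatorElement_eq_of_commute_conj {G : Type*} [Group G] {a b n : G}
    (h : Commute (n * a⁻¹ * n⁻¹) b) : ⁅a, b⁆ = ⁅a, n⁆ * (b * ⁅a, n⁆⁻¹ * b⁻¹) := by
  set c := n * a⁻¹ * n⁻¹ with hc
  have hac : ⁅a, n⁆ = a * c := by rw [hc, commutatorElement_def]; group
  calc ⁅a, b⁆ = a * (b * c * c⁻¹) * a⁻¹ * b⁻¹ := by rw [commutatorElement_def]; group
    _ = a * (c * b * c⁻¹) * a⁻¹ * b⁻¹ := by rw [h.eq]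
    _ = ⁅a, n⁆ * (b * ⁅a, n⁆⁻¹ * b⁻¹) := by rw [hac]; group

namespace IsCompactlyTransitive

variable (hK : IsCompactlyTransitive K) {f g : ℝ ≃o ℝ} {x y : ℝ}
include hK

theorem mem_Icc_of_apply_ne (hf : f ∈ K) (hx : f x ≠ x) : x ∈ Set.Icc (0 : ℝ) 1 := by
  obtain ⟨ε, hε, -, hs⟩ := hK.exists_mem_rigidStabilizer f hf
  have := mem_of_apply_ne hs hx
  exact ⟨hε.le.trans this.1, this.2.trans (by linarith)⟩

theorem exists_conj_mem_rigidStabilizer (hf : f ∈ K) (hg : g ∈ K) (hx : 0 ≤ x) (hxy : x < y)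
    (hy : y ≤ 1) : ∃ t ∈ K, t * f * t⁻¹ ∈ rigidStabilizer (Set.Ioo x y) ∧
      t * g * t⁻¹ ∈ rigidStabilizer (Set.Ioo x y) := by
  obtain ⟨ε, hε, hε', hf⟩ := hK.exists_mem_rigidStabilizer f hf
  obtain ⟨δ, hδ, -, hg⟩ := hK.exists_mem_rigidStabilizer g hg
  have hεe := min_le_left ε δ
  have hδe := min_le_right ε δ
  obtain ⟨t, ht, hta, htb⟩ := hK.exists_compress (a := min ε δ) (b := 1 - min ε δ)
    (lt_min hε hδ) (by linarith) (by linarith [lt_min hε hδ]) hx hxy hy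
  have hmaps : ∀ z ∈ Set.Icc (min ε δ) (1 - min ε δ), t z ∈ Set.Ioo x y := fun z hz ↦
    ⟨hta.trans_le (t.monotone hz.1), (t.monotone hz.2).trans_lt htb⟩
  exact ⟨t, ht,
    conj_mem_rigidStabilizer hf fun z hz ↦ hmaps z ⟨hεe.trans hz.1, by linarith [hz.2]⟩,
    conj_mem_rigidStabilizer hg fun z hz ↦ hmaps z ⟨hδe.trans hz.1, by linarith [hz.2]⟩⟩

/-- Higman's argument: if `f` and `g` are conjugated into an interval `(x, n x)`, then `n`
conjugates `f` away from `g`, so that `⁅f, g⁆` is a product of conjugates of `n` and `n⁻¹`. -/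
theorem commutator_le_of_mem {N : Subgroup (ℝ ≃o ℝ)}
    (hN : ∀ t ∈ K, ∀ n ∈ N, t * n * t⁻¹ ∈ N) {ν : ℝ ≃o ℝ} (hν : ν ∈ N) (hνK : ν ∈ K)
    (hne : ν ≠ 1) : ⁅K, K⁆ ≤ N := by
  obtain ⟨n, hn, hnK, x, hx⟩ : ∃ n ∈ N, n ∈ K ∧ ∃ x, x < n x := by
    obtain ⟨x, hx⟩ : ∃ x, ν x ≠ x := by
      contrapose! hne
      exact RelIso.ext hne
    rcases hx.lt_or_gt with h | h
    · exact ⟨ν⁻¹, inv_mem hν, inv_mem hνK, ν x, by rwa [RelIso.inv_apply_self]⟩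
    · exact ⟨ν, hν, hνK, x, h⟩
  have hx0 : 0 ≤ x := (hK.mem_Icc_of_apply_ne hnK hx.ne').1
  have hx1 : n x ≤ 1 := (hK.mem_Icc_of_apply_ne hnK fun h ↦ hx.ne' (n.injective h)).2
  refine Subgroup.commutator_le.2 fun f hf g hg ↦ ?_
  obtain ⟨t, ht, hsf, hsg⟩ := hK.exists_conj_mem_rigidStabilizer hf hg hx0 hx hx1
  set a := t * f * t⁻¹ with ha
  set b := t * g * t⁻¹ with hb
  have haK : a ∈ K := mul_mem (mul_mem ht hf) (inv_mem ht)
  have hbK : b ∈ K := mul_mem (mul_mem ht hg) (inv_mem ht)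
  have hcomm : Commute (n * a⁻¹ * n⁻¹) b :=
    commute_of_mem_rigidStabilizer (s := Set.Ioi (n x))
      (conj_mem_rigidStabilizer (inv_mem hsf) fun z hz ↦ n.strictMono hz.1) hsg
      (Set.disjoint_left.2 fun z hz hz' ↦ lt_asymm hz hz'.2)
  have han : ⁅a, n⁆ ∈ N := mul_mem (hN a haK n hn) (inv_mem hn)
  have hab : ⁅a, b⁆ ∈ N := by
    rw [commutatorElement_eq_of_commute_conj hcomm]
    exact mul_mem han (hN b hbK _ (inv_mem han))
  have hfg : t⁻¹ * ⁅a, b⁆ * t⁻¹⁻¹ = ⁅f, g⁆ := by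
    rw [ha, hb, commutatorElement_def, commutatorElement_def]; group
  exact hfg ▸ hN t⁻¹ (inv_mem ht) _ hab

/-- If `t` compresses `[a, b]` into `(c, d)` and `h` moves the support of `t` above `b`, then
`⁅t, h⁆` agrees with `t` on `[a, b]`. -/
theorem commutator : IsCompactlyTransitive ⁅K, K⁆ where
  exists_mem_rigidStabilizer f hf := hK.exists_mem_rigidStabilizer f (commutator_le_self K hf)
  exists_compress := by
    intro a b c d ha hab hb hc hcd hd
    obtain ⟨t, ht, hta, htb⟩ := hK.exists_compress ha hab hb hc hcd hd
    obtain ⟨h, hh, hs, -⟩ :=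
      hK.exists_conj_mem_rigidStabilizer (inv_mem ht) ht (ha.le.trans hab) hb le_rfl
    have hth : ⁅t, h⁆ = t * (h * t⁻¹ * h⁻¹) := by rw [commutatorElement_def]; group
    have hz : ∀ z ≤ b, ⁅t, h⁆ z = t z := fun z hz ↦ by
      rw [hth, RelIso.mul_apply, mem_rigidStabilizer.1 hs z fun h ↦ h.1.not_ge hz]
    exact ⟨⁅t, h⁆, Subgroup.commutator_mem_commutator ht hh, by rwa [hz a hab],
      by rwa [hz b le_rfl]⟩

theorem exists_mem_commutator_ne_one : ∃ d ∈ ⁅K, K⁆, d ≠ 1 := by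
  obtain ⟨d, hd, hlt, -⟩ := hK.commutator.exists_compress (a := 1 / 4) (b := 1 / 4) (c := 1 / 2)
    (d := 1) (by norm_num) le_rfl (by norm_num) (by norm_num) (by norm_num) le_rfl
  refine ⟨d, hd, fun h ↦ ?_⟩
  rw [h, RelIso.one_apply] at hlt
  norm_num at hlt

/-- If `κ` moves `x` up, it conjugates any `d` supported in `(x, κ x)` to an automorphism with
disjoint support. -/
theorem exists_not_commute_of_lt {κ : ℝ ≃o ℝ} (hx : 0 ≤ x) (hκ : x < κ x) (hκx : κ x ≤ 1) :
    ∃ d ∈ ⁅K, K⁆, d ∈ rigidStabilizer (Set.Ioo x (κ x)) ∧ ¬ Commute κ d := by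
  obtain ⟨d, hd, hne⟩ := hK.exists_mem_commutator_ne_one
  have hdK := commutator_le_self K hd
  obtain ⟨t, ht, hs, -⟩ := hK.exists_conj_mem_rigidStabilizer hdK hdK hx hκ hκx
  refine ⟨t * d * t⁻¹, conj_mem_commutator ht hd, hs, fun hcomm ↦ hne ?_⟩
  have hs' : κ * (t * d * t⁻¹) * κ⁻¹ ∈ rigidStabilizer (Set.Ioi (κ x)) :=
    conj_mem_rigidStabilizer hs fun z hz ↦ κ.strictMono hz.1
  rw [hcomm.eq, mul_inv_cancel_right] at hs'
  refine conj_eq_one_iff.1 (show t * d * t⁻¹ = 1 from RelIso.ext fun z ↦ ?_)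
  by_contra hz
  exact (mem_of_apply_ne hs hz).2.not_gt (mem_of_apply_ne hs' hz)

theorem exists_not_commute {κ : ℝ ≃o ℝ} {a b : ℝ} (ha : 0 ≤ a) (hb : b ≤ 1)
    (hκ : κ ∈ rigidStabilizer (Set.Icc a b)) (hne : κ ≠ 1) :
    ∃ d ∈ ⁅K, K⁆, d ∈ rigidStabilizer (Set.Icc a b) ∧ ¬ Commute κ d := by
  wlog h : ∃ x, x < κ x generalizing κ
  · obtain ⟨x, hx⟩ : ∃ x, κ x < x := by
      contrapose! hne
      push Not at h
      exact RelIso.ext fun x ↦ (h x).antisymm (hne x)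
    obtain ⟨d, hd, hs, hdκ⟩ := this (inv_mem hκ) (inv_ne_one.2 hne)
      ⟨κ x, by rwa [RelIso.inv_apply_self]⟩
    exact ⟨d, hd, hs, fun h ↦ hdκ h.inv_left⟩
  obtain ⟨x, hx⟩ := h
  have hxab := mem_of_apply_ne hκ hx.ne'
  have hκxab := apply_mem_of_mem_rigidStabilizer hκ hxab
  obtain ⟨d, hd, hs, hdκ⟩ :=
    hK.exists_not_commute_of_lt (ha.trans hxab.1) hx (hκxab.2.trans hb)
  have hsub : Set.Ioo x (κ x) ⊆ Set.Icc a b := fun z hz ↦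
    ⟨hxab.1.trans hz.1.le, hz.2.le.trans hκxab.2⟩
  exact ⟨d, hd, rigidStabilizer_mono hsub hs, hdκ⟩

end IsCompactlyTransitive

end CompactlyTransitive

/-! ### Actions on units -/

section Units

/-- `f` acts on the image of `s` under `e` as `ν` acts on `s`. -/
def SemiconjOn {α β : Type*} [LE α] [LE β] (e : α → β) (s : Set α) (ν : α ≃o α) (f : β ≃o β) :
    Prop :=
  ∀ u ∈ s, f (e u) = e (ν u)

namespace SemiconjOn

variable {α β : Type*} [Preorder α] [Preorder β] {e : α → β} {s : Set α} {ν μ : α ≃o α}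
  {f g : β ≃o β}

theorem one : SemiconjOn e s 1 1 := fun _ _ ↦ rfl

theorem mul (hf : SemiconjOn e s ν f) (hg : SemiconjOn e s μ g) (hμ : μ ∈ rigidStabilizer s) :
    SemiconjOn e s (ν * μ) (f * g) := fun u hu ↦ by
  rw [RelIso.mul_apply, RelIso.mul_apply, hg u hu, hf _ (apply_mem_of_mem_rigidStabilizer hμ hu)]

theorem inv (hf : SemiconjOn e s ν f) (hν : ν ∈ rigidStabilizer s) : SemiconjOn e s ν⁻¹ f⁻¹ :=
  fun u hu ↦ inv_apply_eq_of_apply_eq <| by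
    rw [hf _ (apply_mem_of_mem_rigidStabilizer (inv_mem hν) hu), RelIso.apply_inv_self]

theorem commutator (hf : SemiconjOn e s ν f) (hg : SemiconjOn e s μ g)
    (hν : ν ∈ rigidStabilizer s) (hμ : μ ∈ rigidStabilizer s) : SemiconjOn e s ⁅ν, μ⁆ ⁅f, g⁆ := by
  rw [commutatorElement_def, commutatorElement_def]
  exact ((hf.mul hg hμ).mul (hf.inv hν) (inv_mem hν)).mul (hg.inv hμ) (inv_mem hμ)

end SemiconjOn

/-- The orientation `o m = ±1` determines an isometric chart of the unit
`[m / 2 - 1 / 2, m / 2 + 1 / 2]` by `[0, 1]`. -/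
noncomputable def chart (o : ℤ → ℤˣ) (m : ℤ) (u : ℝ) : ℝ :=
  m / 2 + ((o m : ℤ) : ℝ) * (u - 1 / 2)

/-- `f` acts on every unit `m` of the parity of `p` as `ν m`. -/
def ActsOnUnits (o : ℤ → ℤˣ) (p : ℤ) (ν : ℤ → ℝ ≃o ℝ) (f : ℝ ≃o ℝ) : Prop :=
  ∀ m, Even (m - p) → SemiconjOn (chart o m) (Set.Icc 0 1) (ν m) f

variable {o : ℤ → ℤˣ} {p : ℤ} {f g : ℝ ≃o ℝ}

namespace ActsOnUnits

variable {ν μ : ℤ → ℝ ≃o ℝ}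

theorem one : ActsOnUnits o p 1 1 := fun _ _ ↦ .one

theorem mul (hf : ActsOnUnits o p ν f) (hg : ActsOnUnits o p μ g)
    (hμ : ∀ m, μ m ∈ rigidStabilizer (Set.Icc 0 1)) : ActsOnUnits o p (ν * μ) (f * g) :=
  fun m hm ↦ (hf m hm).mul (hg m hm) (hμ m)

theorem inv (hf : ActsOnUnits o p ν f) (hν : ∀ m, ν m ∈ rigidStabilizer (Set.Icc 0 1)) :
    ActsOnUnits o p ν⁻¹ f⁻¹ :=
  fun m hm ↦ (hf m hm).inv (hν m)

theorem commutator (hf : ActsOnUnits o p ν f) (hg : ActsOnUnits o p μ g)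
    (hν : ∀ m, ν m ∈ rigidStabilizer (Set.Icc 0 1))
    (hμ : ∀ m, μ m ∈ rigidStabilizer (Set.Icc 0 1)) :
    ActsOnUnits o p (fun m ↦ ⁅ν m, μ m⁆) ⁅f, g⁆ :=
  fun m hm ↦ (hf m hm).commutator (hg m hm) (hν m) (hμ m)

end ActsOnUnits

theorem mulIndicator_const_mem {ι M : Type*} [Group M] {L : Subgroup M} (S : Set ι) {ν : M}
    (hν : ν ∈ L) (m : ι) : S.mulIndicator (fun _ ↦ ν) m ∈ L := by
  by_cases hm : m ∈ S <;> simp [hm, hν]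

theorem commutator_mulIndicator_const {ι M : Type*} [Group M] (S T : Set ι) (ν μ : M) (m : ι) :
    ⁅S.mulIndicator (fun _ ↦ ν) m, T.mulIndicator (fun _ ↦ μ) m⁆ =
      (S ∩ T).mulIndicator (fun _ ↦ ⁅ν, μ⁆) m := by
  by_cases hS : m ∈ S <;> by_cases hT : m ∈ T <;> simp [hS, hT]

end Units

section Selectable

/-- `G` contains the simultaneous action of every `ν ∈ K` on all the units of a given parity. -/
def ContainsUnitActions (o : ℤ → ℤˣ) (G K : Subgroup (ℝ ≃o ℝ)) : Prop :=
  ∀ p, ∀ ν ∈ K, ∃ f ∈ G, ActsOnUnits o p (fun _ ↦ ν) f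

/-- The elements of `⁅K, K⁆` can be made to act, within `G`, on the units belonging to `S` only. -/
def IsSelectable (o : ℤ → ℤˣ) (G K : Subgroup (ℝ ≃o ℝ)) (S : Set ℤ) : Prop :=
  ∀ p, ∀ ν ∈ ⁅K, K⁆, ∃ f ∈ G, ActsOnUnits o p (S.mulIndicator fun _ ↦ ν) f

variable {o : ℤ → ℤˣ} {p : ℤ} {S T : Set ℤ} {f g ν : ℝ ≃o ℝ} {G K L : Subgroup (ℝ ≃o ℝ)}

theorem commutatorElement_mem {M : Type*} [Group M] {L : Subgroup M} {a b : M} (ha : a ∈ L)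
    (hb : b ∈ L) : ⁅a, b⁆ ∈ L :=
  commutator_le_self L (Subgroup.commutator_mem_commutator ha hb)

theorem ContainsUnitActions.mono (hG : ContainsUnitActions o G K) (h : L ≤ K) :
    ContainsUnitActions o G L :=
  fun p ν hν ↦ hG p ν (h hν)

theorem IsCompactlyTransitive.le_rigidStabilizer (hK : IsCompactlyTransitive K) :
    K ≤ rigidStabilizer (Set.Icc 0 1) := fun _ hf ↦
  mem_rigidStabilizer.2 fun _ ↦ not_imp_comm.1 (hK.mem_Icc_of_apply_ne hf)

variable (hK : IsCompactlyTransitive K) (hG : ContainsUnitActions o G K)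
include hK hG

theorem exists_actsOnUnits_of_ne_one (hν : ν ∈ K) (hne : ν ≠ 1) (hfG : f ∈ G)
    (hf : ActsOnUnits o p (S.mulIndicator fun _ ↦ ν) f) {d : ℝ ≃o ℝ} (hd : d ∈ ⁅K, K⁆) :
    ∃ f ∈ G, ActsOnUnits o p (S.mulIndicator fun _ ↦ d) f := by
  have hK01 := hK.le_rigidStabilizer
  have hind {ν} (hν : ν ∈ K) := mulIndicator_const_mem S (hK01 hν)
  let N : Subgroup (ℝ ≃o ℝ) :=
    { carrier := {ν | ν ∈ K ∧ ∃ f ∈ G, ActsOnUnits o p (S.mulIndicator fun _ ↦ ν) f}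
      mul_mem' := by
        rintro a b ⟨ha, f, hf, h⟩ ⟨hb, g, hg, h'⟩
        exact ⟨mul_mem ha hb, f * g, mul_mem hf hg,
          (Set.mulIndicator_mul S (fun _ ↦ a) fun _ ↦ b) ▸ h.mul h' (hind hb)⟩
      one_mem' := ⟨one_mem K, 1, one_mem G, fun m _ ↦ by rw [Set.mulIndicator_one]; exact .one⟩
      inv_mem' := by
        rintro a ⟨ha, f, hf, h⟩
        exact ⟨inv_mem ha, f⁻¹, inv_mem hf,
          (Set.mulIndicator_inv S fun _ ↦ a) ▸ h.inv (hind ha)⟩ }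
  have hN : ∀ t ∈ K, ∀ n ∈ N, t * n * t⁻¹ ∈ N := by
    rintro t ht n ⟨hn, f, hf, h⟩
    obtain ⟨F, hF, hF'⟩ := hG p t ht
    refine ⟨mul_mem (mul_mem ht hn) (inv_mem ht), F * f * F⁻¹,
      mul_mem (mul_mem hF hf) (inv_mem hF), fun m hm ↦ ?_⟩
    convert ((hF'.mul h (hind hn)).mul (hF'.inv fun _ ↦ hK01 ht)
      fun _ ↦ inv_mem (hK01 ht)) m hm using 1
    by_cases hmS : m ∈ S <;> simp [hmS]
  exact (hK.commutator_le_of_mem hN ⟨hν, f, hfG, hf⟩ hν hne hd).2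

namespace IsSelectable

omit hK in
theorem univ : IsSelectable o G K Set.univ := fun p ν hν ↦ by
  simpa only [Set.mulIndicator_univ] using hG p ν (commutator_le_self K hν)

theorem compl (hS : IsSelectable o G K S) : IsSelectable o G K Sᶜ := fun p ν hν ↦ by
  have hν' := commutator_le_self K hν
  obtain ⟨F, hF, hF'⟩ := hG p ν hν'
  obtain ⟨f, hf, hf'⟩ := hS p ν hν
  have hind := mulIndicator_const_mem S (hK.le_rigidStabilizer hν')
  refine ⟨F * f⁻¹, mul_mem hF (inv_mem hf), ?_⟩
  rw [Set.mulIndicator_compl']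
  exact hF'.mul (hf'.inv hind) fun m ↦ inv_mem (hind m)

theorem inter (hS : IsSelectable o G K S) (hT : IsSelectable o G K T) :
    IsSelectable o G K (S ∩ T) := fun p _ hd ↦ by
  obtain ⟨κ, hκ, hne⟩ := hK.exists_mem_commutator_ne_one
  have hκK := commutator_le_self K hκ
  obtain ⟨μ, hμ, -, hncomm⟩ :=
    hK.exists_not_commute le_rfl le_rfl (hK.le_rigidStabilizer hκK) hne
  have hμK := commutator_le_self K hμ
  obtain ⟨f, hf, hf'⟩ := hS p κ hκ
  obtain ⟨g, hg, hg'⟩ := hT p μ hμ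
  have hfg := hf'.commutator hg' (mulIndicator_const_mem S (hK.le_rigidStabilizer hκK))
    (mulIndicator_const_mem T (hK.le_rigidStabilizer hμK))
  simp only [commutator_mulIndicator_const] at hfg
  exact exists_actsOnUnits_of_ne_one hK hG (commutatorElement_mem hκK hμK)
    (mt commutatorElement_eq_one_iff_commute.1 hncomm) (commutatorElement_mem hf hg) hfg hd

theorem union (hS : IsSelectable o G K S) (hT : IsSelectable o G K T) :
    IsSelectable o G K (S ∪ T) := by
  simpa only [Set.compl_inter, compl_compl] using
    ((hS.compl hK hG).inter hK hG (hT.compl hK hG)).compl hK hG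

omit hK in
theorem even : IsSelectable o G K {m | Even m} := fun p ν hν ↦ by
  by_cases hp : Even p
  · obtain ⟨f, hf, h⟩ := hG p ν (commutator_le_self K hν)
    refine ⟨f, hf, fun m hm ↦ ?_⟩
    rw [Set.mulIndicator_of_mem (s := {m : ℤ | Even m}) ((Int.even_sub.1 hm).2 hp)]
    exact h m hm
  · refine ⟨1, one_mem G, fun m hm ↦ ?_⟩
    rw [Set.mulIndicator_of_notMem (s := {m : ℤ | Even m}) fun h ↦ hp ((Int.even_sub.1 hm).1 h)]
    exact .one

end IsSelectable

end Selectable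

/-! ### Neighbouring units -/

section Neighbours

/-- The half of `[0, 1]` on the side of `ε`. -/
def half (ε : ℤˣ) : Set ℝ := Set.Icc (1 / 4 + ((ε : ℤ) : ℝ) / 4) (3 / 4 + ((ε : ℤ) : ℝ) / 4)

/-- The coordinate change from a unit to its neighbour on the side of `ε`, when the relative
orientation of the two units is `δ`. -/
noncomputable def transition (ε δ : ℤˣ) (u : ℝ) : ℝ :=
  1 / 2 + ((δ : ℤ) : ℝ) * (u - 1 / 2 - ((ε : ℤ) : ℝ) / 2)

/-- The `j`-th unit from `m` on, counted in the direction in which `m` is oriented. For `j = ±1`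
it overlaps the half `±1` of `m`. -/
def neighbour (o : ℤ → ℤˣ) (j m : ℤ) : ℤ := m + j * o m

/-- The orientation of the `j`-th neighbour of `m` relative to that of `m`. -/
def relOrientation (o : ℤ → ℤˣ) (j m : ℤ) : ℤˣ := o (neighbour o j m) * o m

/-- The units whose `j`-th neighbour lies in `S` and has relative orientation `δ`. -/
def neighbourPreimage (o : ℤ → ℤˣ) (S : Set ℤ) (j : ℤ) (δ : ℤˣ) : Set ℤ :=
  {m | neighbour o j m ∈ S ∧ relOrientation o j m = δ}

variable {o : ℤ → ℤˣ} {ε δ ζ : ℤˣ} {m p : ℤ} {u : ℝ} {κ ν f : ℝ ≃o ℝ} {G K : Subgroup (ℝ ≃o ℝ)}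

theorem half_one : half 1 = Set.Icc (1 / 2) 1 := by norm_num [half]

theorem half_neg_one : half (-1) = Set.Icc 0 (1 / 2) := by norm_num [half]

theorem half_subset (ε : ℤˣ) : half ε ⊆ Set.Icc 0 1 := by
  rcases Int.units_eq_one_or ε with rfl | rfl
  · exact half_one ▸ Set.Icc_subset_Icc_left (by norm_num)
  · exact half_neg_one ▸ Set.Icc_subset_Icc_right (by norm_num)

theorem mem_half_neg_of_notMem (hu : u ∈ Set.Icc (0 : ℝ) 1) (h : u ∉ half ε) : u ∈ half (-ε) := by
  rcases Int.units_eq_one_or ε with rfl | rfl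
  · rw [half_one, Set.mem_Icc] at h
    rw [half_neg_one]
    exact ⟨hu.1, le_of_not_ge fun h' ↦ h ⟨h', hu.2⟩⟩
  · rw [half_neg_one, Set.mem_Icc] at h
    rw [neg_neg, half_one]
    exact ⟨le_of_not_ge fun h' ↦ h ⟨hu.1, h'⟩, hu.2⟩

theorem apply_eq_of_mem_half_neg (hν : ν ∈ rigidStabilizer (half ε)) (hu : u ∈ half (-ε)) :
    ν u = u := by
  refine mem_rigidStabilizer.1 (mem_rigidStabilizer_Ioo hν) u fun h ↦ ?_
  rcases Int.units_eq_one_or ε with rfl | rfl <;> simp [half] at hu h <;> linarith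

theorem apply_mem_half (hν : ν ∈ rigidStabilizer (half ε)) (hu : u ∈ half ζ) : ν u ∈ half ζ := by
  rcases eq_or_ne ζ ε with rfl | h
  · exact apply_mem_of_mem_rigidStabilizer hν hu
  · obtain rfl := Int.units_ne_iff_eq_neg.1 h
    rwa [apply_eq_of_mem_half_neg hν hu]

theorem transition_mem_half (hu : u ∈ half ε) (δ : ℤˣ) : transition ε δ u ∈ half (-(δ * ε)) := by
  rcases Int.units_eq_one_or ε with rfl | rfl <;> rcases Int.units_eq_one_or δ with rfl | rfl <;>
    simp [half, transition] at hu ⊢ <;> constructor <;> linarith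

theorem transition_transition (ε δ : ℤˣ) (u : ℝ) :
    transition (-(δ * ε)) δ (transition ε δ u) = u := by
  rcases Int.units_eq_one_or ε with rfl | rfl <;> rcases Int.units_eq_one_or δ with rfl | rfl <;>
    simp [transition] <;> ring

theorem orientation_neighbour (o : ℤ → ℤˣ) (j m : ℤ) :
    o (neighbour o j m) = relOrientation o j m * o m := by
  rw [relOrientation, mul_assoc, Int.units_mul_self, mul_one]

theorem chart_neighbour (o : ℤ → ℤˣ) (ε : ℤˣ) (m : ℤ) (u : ℝ) :
    chart o (neighbour o ε m) (transition ε (relOrientation o ε m) u) = chart o m u := by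
  rw [chart, chart, orientation_neighbour o ε m, transition]
  generalize relOrientation o ε m = δ
  rw [neighbour]
  rcases Int.units_eq_one_or ε with rfl | rfl <;> rcases Int.units_eq_one_or δ with rfl | rfl <;>
    rcases Int.units_eq_one_or (o m) with hm | hm <;> simp [hm] <;> ring

theorem even_neighbour_sub (hm : Even (m - p)) (ε : ℤˣ) :
    Even (neighbour o ε m - (p + 1)) := by
  rw [neighbour]
  rcases Int.units_eq_one_or (ε * o m) with h | h <;> rw [← Units.val_mul, h]
  · simpa using hm
  · rw [Units.val_neg, Units.val_one]
    have h2 : m + -1 - (p + 1) = m - p - 2 := by ring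
    exact h2 ▸ hm.sub even_two

theorem bump_mem_of_half (hK : IsDyadicBumpGroup K) {p q : ℝ} (dp : IsDyadic p) (dq : IsDyadic q)
    (hq : 0 < q) (hp : 1 / 4 + ((ε : ℤ) : ℝ) / 4 < p) (hpq : p + q < 3 / 4 + ((ε : ℤ) : ℝ) / 4) :
    bump p q ∈ K ∧ bump p q ∈ rigidStabilizer (half ε) := by
  refine ⟨hK.bump_mem dp dq ?_ hq ?_, rigidStabilizer_mono
    (Set.Ioo_subset_Icc_self.trans (Set.Icc_subset_Icc hp.le hpq.le))
    (bump_mem_rigidStabilizer p q)⟩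
  all_goals rcases Int.units_eq_one_or ε with rfl | rfl <;> norm_num at hp hpq ⊢ <;> linarith

theorem exists_semiconjOn_transition_bump (hK : IsDyadicBumpGroup K) (δ : ℤˣ) {p q : ℝ}
    (dp : IsDyadic p) (dq : IsDyadic q) (hq : 0 < q) (hp : 1 / 4 + ((ε : ℤ) : ℝ) / 4 < p)
    (hpq : p + q < 3 / 4 + ((ε : ℤ) : ℝ) / 4) :
    ∃ ν ∈ K, ν ∈ rigidStabilizer (half (-(δ * ε))) ∧
      SemiconjOn (transition ε δ) (half ε) (bump p q) ν := by
  have dε : IsDyadic (((ε : ℤ) : ℝ) / 2) := by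
    simpa only [pow_one] using (IsDyadic.intCast ε).div_two_pow 1
  rcases Int.units_eq_one_or δ with rfl | rfl
  · have hν := bump_mem_of_half hK (ε := -ε) (dp.add dε.neg) dq hq (by push_cast; linarith)
      (by push_cast; linarith)
    refine ⟨_, hν.1, by rw [one_mul]; exact hν.2, fun u _ ↦ ?_⟩
    have h (v : ℝ) : transition ε 1 v = v + -(((ε : ℤ) : ℝ) / 2) := by simp [transition]; ring
    rw [h, h, bump_add]
  · have hν := bump_mem_of_half hK (ε := ε)
      ((((IsDyadic.intCast 1).add dε).sub dp).sub dq) dq hq (by push_cast; linarith)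
      (by push_cast; linarith)
    refine ⟨_, inv_mem hν.1, by rw [neg_one_mul, neg_neg]; exact inv_mem hν.2, fun u _ ↦
      inv_apply_eq_of_apply_eq ?_⟩
    have h (v : ℝ) : transition ε (-1) v = ((1 : ℤ) : ℝ) + ((ε : ℤ) : ℝ) / 2 - v := by
      simp [transition]; ring
    rw [h, h, bump_reflect hq]

theorem not_commute_bump_bump (p : ℝ) :
    ¬ Commute (bump p (1 / 4)) (bump (p + 1 / 16) (1 / 16)) := fun hcomm ↦ by
  have h := congrArg (fun f : ℝ ≃o ℝ ↦ f (p + 3 / 32)) hcomm.eq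
  have hlt := (bump p (1 / 4)).strictMono
    (lt_bump_apply (p := p + 1 / 16) (q := 1 / 16) (x := p + 3 / 32) (by linarith) (by linarith))
  rw [RelIso.mul_apply, RelIso.mul_apply,
    bump_apply_of_add_le (p := p + 1 / 16) (x := bump p (1 / 4) (p + 3 / 32))] at h
  · exact hlt.ne' h
  · rw [bump_apply_second (by linarith) (by linarith)]
    linarith

theorem exists_semiconjOn_transition (hK : IsDyadicBumpGroup K) (ε δ : ℤˣ) :
    ∃ κ ∈ ⁅K, K⁆, ∃ ν ∈ ⁅K, K⁆, κ ≠ 1 ∧ κ ∈ rigidStabilizer (half ε) ∧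
      ν ∈ rigidStabilizer (half (-(δ * ε))) ∧ SemiconjOn (transition ε δ) (half ε) κ ν := by
  have dp : IsDyadic (3 / 8 + ((ε : ℤ) : ℝ) / 4) := ⟨3 + 2 * ε, 3, by push_cast; ring⟩
  have dp' : IsDyadic (3 / 8 + ((ε : ℤ) : ℝ) / 4 + 1 / 16) := ⟨7 + 4 * ε, 4, by push_cast; ring⟩
  have d4 : IsDyadic (1 / 4) := ⟨1, 2, by norm_num⟩
  have d16 : IsDyadic (1 / 16) := ⟨1, 4, by norm_num⟩
  obtain ⟨h1K, h1⟩ := bump_mem_of_half (ε := ε) hK dp d4 (by norm_num) (by linarith) (by linarith)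
  obtain ⟨h2K, h2⟩ :=
    bump_mem_of_half (ε := ε) hK dp' d16 (by norm_num) (by linarith) (by linarith)
  obtain ⟨ν₁, hν₁K, hν₁, hs₁⟩ := exists_semiconjOn_transition_bump (ε := ε) hK δ dp d4
    (by norm_num) (by linarith) (by linarith)
  obtain ⟨ν₂, hν₂K, hν₂, hs₂⟩ := exists_semiconjOn_transition_bump (ε := ε) hK δ dp' d16
    (by norm_num) (by linarith) (by linarith)
  exact ⟨_, Subgroup.commutator_mem_commutator h1K h2K, _,
    Subgroup.commutator_mem_commutator hν₁K hν₂K,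
    mt commutatorElement_eq_one_iff_commute.1 (not_commute_bump_bump _),
    commutatorElement_mem h1 h2, commutatorElement_mem hν₁ hν₂, hs₁.commutator hs₂ h1 h2⟩

theorem ActsOnUnits.apply_chart_of_mem_half {ν : ℤ → ℝ ≃o ℝ} (hf : ActsOnUnits o (p + 1) ν f)
    (hm : Even (m - p)) (hu : u ∈ half ε) :
    f (chart o m u) = chart o (neighbour o ε m)
      (ν (neighbour o ε m) (transition ε (relOrientation o ε m) u)) := by
  rw [← chart_neighbour o ε m u,
    hf _ (even_neighbour_sub hm ε) _ (half_subset _ (transition_mem_half hu _))]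

theorem ActsOnUnits.semiconjOn_half {S : Set ℤ}
    (hf : ActsOnUnits o (p + 1) (S.mulIndicator fun _ ↦ ν) f)
    (hν : ν ∈ rigidStabilizer (half (-(δ * ε)))) (hs : SemiconjOn (transition ε δ) (half ε) κ ν)
    (hm : Even (m - p)) :
    SemiconjOn (chart o m) (half ε)
      ((neighbourPreimage o S ε δ).mulIndicator (fun _ ↦ κ) m) f := by
  intro u hu
  rw [hf.apply_chart_of_mem_half hm hu]
  by_cases hS : neighbour o ε m ∈ S
  · rw [Set.mulIndicator_of_mem hS]
    by_cases hδ : relOrientation o ε m = δ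
    · rw [Set.mulIndicator_of_mem (show m ∈ neighbourPreimage o S ε δ from ⟨hS, hδ⟩), hδ, hs u hu,
        ← hδ, chart_neighbour]
    · rw [Set.mulIndicator_of_notMem fun h ↦ hδ h.2, RelIso.one_apply]
      have hmem := transition_mem_half hu (relOrientation o ε m)
      rw [Int.units_ne_iff_eq_neg.1 hδ, neg_mul] at hmem
      rw [Int.units_ne_iff_eq_neg.1 hδ, apply_eq_of_mem_half_neg hν hmem,
        ← Int.units_ne_iff_eq_neg.1 hδ, chart_neighbour]
  · rw [Set.mulIndicator_of_notMem hS, Set.mulIndicator_of_notMem fun h ↦ hS h.1,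
      RelIso.one_apply, RelIso.one_apply, chart_neighbour]

theorem ActsOnUnits.exists_apply_chart_eq {ν : ℤ → ℝ ≃o ℝ} (hf : ActsOnUnits o (p + 1) ν f)
    (hν : ∀ m, ν m ∈ rigidStabilizer (half ζ)) (hm : Even (m - p)) (hu : u ∈ half ε) :
    ∃ v ∈ half ε, f (chart o m u) = chart o m v := by
  set δ := relOrientation o ε m with hδ
  set w := ν (neighbour o ε m) (transition ε δ u)
  have hw : w ∈ half (-(δ * ε)) := apply_mem_half (hν _) (transition_mem_half hu δ)
  have hback : transition ε δ (transition (-(δ * ε)) δ w) = w := by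
    simpa [← mul_assoc] using transition_transition (-(δ * ε)) δ w
  refine ⟨transition (-(δ * ε)) δ w, ?_, ?_⟩
  · simpa [← mul_assoc] using transition_mem_half hw δ
  · rw [hf.apply_chart_of_mem_half hm hu, ← chart_neighbour o ε m, ← hδ, hback]

theorem commutatorElement_apply_eq {α : Type*} [Preorder α] {f g : α ≃o α} {x : α} (h : g x = x)
    (h' : g (f⁻¹ x) = f⁻¹ x) : ⁅f, g⁆ x = x := by
  rw [commutatorElement_def, RelIso.mul_apply, RelIso.mul_apply, RelIso.mul_apply,
    inv_apply_eq_of_apply_eq h, h', RelIso.apply_inv_self]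

/-- The action `ν` on the units of `S` of the other parity is seen in the half `ε` of the units of
`neighbourPreimage o S ε δ` as `κ`; taking the commutator with an action `μ` supported in the
half `ε` kills what happens in the other half. -/
theorem IsSelectable.neighbourPreimage_units (hK : IsDyadicBumpGroup K)
    (hG : ContainsUnitActions o G K) {S : Set ℤ} (hS : IsSelectable o G K S) (ε δ : ℤˣ) :
    IsSelectable o G K (neighbourPreimage o S ε δ) := fun p d hd ↦ by
  have hK' := hK.isCompactlyTransitive
  obtain ⟨κ, hκ, ν, hν, hne, hκε, hνε, hs⟩ := exists_semiconjOn_transition hK ε δ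
  have h01 := Set.Icc_subset_Icc_iff (a₁ := 1 / 4 + ((ε : ℤ) : ℝ) / 4) (by linarith) |>.1
    (half_subset ε)
  obtain ⟨μ, hμ, hμε, hncomm⟩ := hK'.exists_not_commute h01.1 h01.2 hκε hne
  have hκK := commutator_le_self K hκ
  have hμK := commutator_le_self K hμ
  obtain ⟨F, hF, hF'⟩ := hS (p + 1) ν hν
  obtain ⟨g, hg, hg'⟩ := hG p μ hμK
  refine exists_actsOnUnits_of_ne_one hK' hG (commutatorElement_mem hκK hμK)
    (mt commutatorElement_eq_one_iff_commute.1 hncomm) (commutatorElement_mem hF hg)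
    (fun m hm u hu ↦ ?_) hd
  by_cases huε : u ∈ half ε
  · have hcomm := (hF'.semiconjOn_half hνε hs hm).commutator
      (fun v hv ↦ hg' m hm v (half_subset ε hv)) (mulIndicator_const_mem _ hκε m) hμε u huε
    rw [hcomm]
    by_cases hmS : m ∈ neighbourPreimage o S ε δ <;> simp [hmS]
  · have hu' := mem_half_neg_of_notMem hu huε
    have hg_fix {v} (hv : v ∈ half (-ε)) : g (chart o m v) = chart o m v := by
      rw [hg' m hm v (half_subset _ hv), apply_eq_of_mem_half_neg hμε hv]
    have hinv := hF'.inv (mulIndicator_const_mem S <|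
      hK'.le_rigidStabilizer (commutator_le_self K hν))
    obtain ⟨v, hv, hFv⟩ := hinv.exists_apply_chart_eq
      (fun m ↦ inv_mem (mulIndicator_const_mem S hνε m)) hm hu'
    rw [commutatorElement_apply_eq (hg_fix hu') (hFv ▸ hg_fix hv), apply_eq_of_mem_half_neg
      (mulIndicator_const_mem _ (commutatorElement_mem hκε hμε) m) hu']

end Neighbours

section Neighbours

variable {o : ℤ → ℤˣ} {S : Set ℤ} {G K : Subgroup (ℝ ≃o ℝ)}

theorem neighbour_neighbour (o : ℤ → ℤˣ) (i j m : ℤ) :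
    neighbour o j (neighbour o i m) = neighbour o (i + relOrientation o i m * j) m := by
  rw [neighbour, orientation_neighbour o i, neighbour, neighbour, Units.val_mul]
  ring

theorem relOrientation_neighbour (o : ℤ → ℤˣ) (i j m : ℤ) :
    relOrientation o j (neighbour o i m) =
      relOrientation o (i + relOrientation o i m * j) m * relOrientation o i m := by
  rw [relOrientation, neighbour_neighbour, orientation_neighbour o (_ + _),
    orientation_neighbour o i, mul_mul_mul_comm, Int.units_mul_self, mul_one]

theorem neighbour_mul_orientation (o : ℤ → ℤˣ) (i m : ℤ) : neighbour o (i * o m) m = m + i := by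
  rw [neighbour, mul_assoc, Int.units_coe_mul_self, mul_one]

theorem neighbourPreimage_zero (o : ℤ → ℤˣ) (S : Set ℤ) (δ : ℤˣ) :
    neighbourPreimage o S 0 δ = {m | m ∈ S ∧ 1 = δ} := by
  simp [neighbourPreimage, relOrientation, neighbour, Int.units_mul_self]

theorem neighbourPreimage_neighbourPreimage (o : ℤ → ℤˣ) (S : Set ℤ) (i j : ℤ) (δ ε : ℤˣ) :
    neighbourPreimage o (neighbourPreimage o S (ε * j) (δ * ε)) i ε =
      {m | m ∈ neighbourPreimage o S (i + j) δ ∧ relOrientation o i m = ε} := by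
  ext m
  refine and_congr_left fun h ↦ ?_
  simp only [neighbourPreimage, Set.mem_ofPred_eq, neighbour_neighbour, relOrientation_neighbour, h,
    ← mul_assoc, Int.units_coe_mul_self, one_mul, mul_left_inj]

theorem neighbourPreimage_add (o : ℤ → ℤˣ) (S : Set ℤ) (i j : ℤ) (δ : ℤˣ) :
    neighbourPreimage o S (i + j) δ = neighbourPreimage o (neighbourPreimage o S j δ) i 1 ∪
      neighbourPreimage o (neighbourPreimage o S (-j) (-δ)) i (-1) := by
  have h (ε : ℤˣ) := neighbourPreimage_neighbourPreimage o S i j δ ε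
  have h1 := h 1
  have h2 := h (-1)
  simp only [Units.val_one, one_mul, mul_one, Units.val_neg, neg_one_mul, mul_neg_one] at h1 h2
  rw [h1, h2]
  ext m
  have := Int.units_eq_one_or (relOrientation o i m)
  simp only [Set.mem_union, Set.mem_ofPred_eq]
  tauto

variable (hK : IsDyadicBumpGroup K) (hG : ContainsUnitActions o G K)
include hK hG

theorem IsSelectable.neighbourPreimage (hS : IsSelectable o G K S) (j : ℤ) (δ : ℤˣ) :
    IsSelectable o G K (neighbourPreimage o S j δ) := by
  have hnat (n : ℕ) : ∀ ε δ : ℤˣ, IsSelectable o G K (_root_.neighbourPreimage o S (ε * n) δ) := by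
    induction n with
    | zero =>
      intro ε δ
      rw [Nat.cast_zero, mul_zero, neighbourPreimage_zero]
      rcases Int.units_eq_one_or δ with rfl | rfl
      · simpa using hS
      · simpa using (univ hG).compl hK.isCompactlyTransitive hG
    | succ n ih =>
      intro ε δ
      rw [Nat.cast_succ, mul_add_one, add_comm, neighbourPreimage_add, ← neg_mul, ← Units.val_neg]
      exact ((ih ε δ).neighbourPreimage_units hK hG ε 1).union hK.isCompactlyTransitive hG
        ((ih (-ε) (-δ)).neighbourPreimage_units hK hG ε (-1))
  obtain ⟨n, rfl | rfl⟩ := Int.eq_nat_or_neg j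
  · simpa using hnat n 1 δ
  · simpa using hnat n (-1) δ

theorem IsSelectable.neighbour_mem (hS : IsSelectable o G K S) (j : ℤ) :
    IsSelectable o G K {m | neighbour o j m ∈ S} := by
  convert (hS.neighbourPreimage hK hG j 1).union hK.isCompactlyTransitive hG
    (hS.neighbourPreimage hK hG j (-1)) using 1
  ext m
  simp only [_root_.neighbourPreimage, Set.mem_union, Set.mem_ofPred_eq, ← and_or_left,
    Int.units_eq_one_or, and_true]

theorem IsSelectable.forall_mem_finset {ι : Type*} {A : ι → Set ℤ} (s : Finset ι)
    (hA : ∀ j ∈ s, IsSelectable o G K (A j)) : IsSelectable o G K {m | ∀ j ∈ s, m ∈ A j} := by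
  classical
  induction s using Finset.induction_on with
  | empty => simpa using IsSelectable.univ hG
  | insert a s _ ih =>
    simp only [Finset.forall_mem_insert] at hA ⊢
    exact hA.1.inter hK.isCompactlyTransitive hG (ih hA.2)

end Neighbours

/-! ### Markers -/

section Markers

variable {o : ℤ → ℤˣ} {G K : Subgroup (ℝ ≃o ℝ)} {i x y : ℤ} {n : ℕ}

/-- The even units whose surroundings up to distance `n`, read in the direction of the unit, are
oriented as those of the unit `0`. -/
def markers (o : ℤ → ℤˣ) (n : ℕ) : Set ℤ :=
  {m | Even m ∧ ∀ j : ℤ, |j| ≤ n → relOrientation o j m = relOrientation o j 0}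

theorem isSelectable_markers (hK : IsDyadicBumpGroup K) (hG : ContainsUnitActions o G K) (n : ℕ) :
    IsSelectable o G K (markers o n) := by
  convert (IsSelectable.even hG).inter hK.isCompactlyTransitive hG
    (IsSelectable.forall_mem_finset hK hG (Finset.Icc (-(n : ℤ)) n) fun j _ ↦
      (IsSelectable.univ hG).neighbourPreimage hK hG j (relOrientation o j 0)) using 1
  ext m
  simp [markers, neighbourPreimage, abs_le]

/-- Quasi-periodicity of a labelling, in terms of its orientation. -/
structure IsQuasiPeriodicOrientation (o : ℤ → ℤˣ) : Prop where
  exists_recurrence (k : ℤ) (n : ℕ) : ∃ L : ℕ, ∀ z : ℤ, ∃ s ∈ Set.Icc z (z + L), Even (s - k) ∧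
    ∀ i ∈ Set.Icc (0 : ℤ) n, o (s + i) = o (k + i)
  exists_reversal (k : ℤ) (n : ℕ) : ∃ k', Even (k' - (k + n)) ∧
    ∀ i ∈ Set.Icc (0 : ℤ) n, o (k' + i) = -o (k + n - i)

theorem IsQuasiPeriodicOrientation.exists_mem_markers (ho : IsQuasiPeriodicOrientation o) (n : ℕ) :
    ∃ L : ℕ, ∀ z : ℤ, ∃ x ∈ markers o n, z ≤ x ∧ x ≤ z + L := by
  obtain ⟨L, hL⟩ := ho.exists_recurrence (-n) (2 * n)
  refine ⟨L, fun z ↦ ?_⟩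
  obtain ⟨s, ⟨h1, h2⟩, h3, h4⟩ := hL (z - n)
  have key {i : ℤ} (hi : |i| ≤ n) : o (s + n + i) = o (0 + i) := by
    rw [abs_le] at hi
    convert h4 (n + i) ⟨by linarith, by push_cast; linarith⟩ using 2 <;> ring
  have h0 : o (s + n) = o 0 := by simpa using key (i := 0) (by simp)
  refine ⟨s + n, ⟨by simpa using h3, fun j hj ↦ ?_⟩, by linarith, by linarith⟩
  rw [relOrientation, relOrientation, neighbour, neighbour, h0, key]
  rcases Int.units_eq_one_or (o 0) with h | h <;> simpa [h] using hj

theorem abs_mul_units (i : ℤ) (ε : ℤˣ) : |i * ε| = |i| := by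
  rcases Int.units_eq_one_or ε with rfl | rfl <;> simp

/-- If `x` and `y` had opposite orientations, they would see the unit halfway between them at the
same position, but with opposite relative orientations. -/
theorem orientation_eq_of_mem_markers (hx : x ∈ markers o n) (hy : y ∈ markers o n)
    (hxy : |y - x| ≤ 2 * n) : o y = o x := by
  by_contra hne
  obtain ⟨d, hd⟩ := hy.1.sub hx.1
  have hj : |d * o x| ≤ n := by
    rw [abs_mul_units]
    rw [hd, ← two_mul, abs_mul, abs_two] at hxy
    linarith
  have h := (hx.2 _ hj).trans (hy.2 _ hj).symm
  have hy' : d * o x = -d * o y := by rw [Int.units_ne_iff_eq_neg.1 hne]; simp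
  rw [relOrientation, neighbour_mul_orientation, hy', relOrientation, neighbour_mul_orientation,
    show y + -d = x + d by linarith, mul_right_inj] at h
  exact hne h.symm

theorem orientation_add_eq_of_mem_markers (hx : x ∈ markers o n) (hy : y ∈ markers o n)
    (hxy : |y - x| ≤ 2 * n) (hi : |i| ≤ n) : o (y + i) = o (x + i) := by
  have hj : |i * o x| ≤ n := by rwa [abs_mul_units]
  have h := (hy.2 _ hj).trans (hx.2 _ hj).symm
  have hor := orientation_eq_of_mem_markers hx hy hxy
  rwa [relOrientation, ← hor, neighbour_mul_orientation, hor, relOrientation,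
    neighbour_mul_orientation, mul_left_inj] at h

theorem IsQuasiPeriodicOrientation.not_periodic (ho : IsQuasiPeriodicOrientation o) {Q : ℕ}
    (hQ : 0 < Q) : ¬ Function.Periodic o (2 * Q) := fun hper ↦ by
  obtain ⟨k, hk, h⟩ := ho.exists_reversal 0 (2 * Q)
  obtain ⟨r, rfl⟩ : Even k := (Int.even_sub.1 hk).2 (by simp)
  have hper' (t i : ℤ) : o (i + t * (2 * Q)) = o i := hper.int_mul t i
  have hQ' : (0 : ℤ) < Q := by exact_mod_cast hQ
  have hmod := Int.emod_add_mul_ediv (-r) Q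
  have hlt := Int.emod_lt_of_pos (-r) hQ'
  -- The reversal is a reflection about an integer, which by periodicity we may take to be `0`.
  have hrefl := h ((-r) % Q) ⟨Int.emod_nonneg _ hQ'.ne', by push_cast; linarith⟩
  rw [show r + r + (-r) % Q = -((-r) % Q) + -((-r) / Q) * (2 * Q) by linear_combination 2 * hmod,
    show 0 + ((2 * Q : ℕ) : ℤ) - (-r) % Q = -((-r) % Q) + 2 * Q by push_cast; ring, hper',
    hper] at hrefl
  exact units_ne_neg_self _ hrefl

theorem apply_add_mul_eq_of_locally_periodic {α : Type*} {o : ℤ → α} {x d n : ℤ} (hd : 0 ≤ d)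
    (h : ∀ i, 0 ≤ i → i ≤ n → o (x + i + d) = o (x + i)) (t : ℕ) :
    ∀ i, 0 ≤ i → i + t * d ≤ n → o (x + i + t * d) = o (x + i) := by
  induction t with
  | zero => simp
  | succ t ih =>
    intro i hi hn
    push_cast at hn ⊢
    have htd : 0 ≤ t * d := by positivity
    rw [show x + i + (t + 1) * d = x + (i + t * d) + d by ring, h _ (by linarith) (by linarith),
      ← add_assoc, ih i hi (by linarith)]

/-- Two markers at small distance make the orientation periodic on a long interval, hence by
recurrence everywhere. -/
theorem IsQuasiPeriodicOrientation.exists_markers_sparse (ho : IsQuasiPeriodicOrientation o)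
    (L : ℕ) : ∃ n : ℕ, (markers o n).Pairwise fun x y ↦ (L : ℤ) < |x - y| := by
  by_contra! hcon
  refine ho.not_periodic L.factorial_pos fun i ↦ ?_
  obtain ⟨M, hM⟩ := ho.exists_recurrence i (2 * L.factorial)
  set n := M + 2 * L.factorial + L
  obtain ⟨x, hx, y, hy, hxy, hL⟩ : ∃ x ∈ markers o n, ∃ y ∈ markers o n, x < y ∧ y - x ≤ L := by
    obtain ⟨x, hx, y, hy, hne, hL⟩ : ∃ x ∈ markers o n, ∃ y ∈ markers o n, x ≠ y ∧ |x - y| ≤ L := by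
      simpa [Set.Pairwise] using hcon n
    rcases hne.lt_or_gt with h | h
    · exact ⟨x, hx, y, hy, h, (le_abs_self (y - x)).trans (abs_sub_comm x y ▸ hL)⟩
    · exact ⟨y, hy, x, hx, h, (le_abs_self (x - y)).trans hL⟩
  have hclose : |y - x| ≤ 2 * n := by rw [abs_of_pos (by linarith)]; lia
  obtain ⟨t, ht⟩ : ∃ t : ℕ, 2 * (L.factorial : ℤ) = t * (y - x) := by
    obtain ⟨d, hd⟩ := Int.eq_ofNat_of_zero_le (sub_nonneg.2 hxy.le)
    obtain ⟨t, ht⟩ := Nat.dvd_factorial (m := d) (n := L) (by lia) (by lia)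
    exact ⟨2 * t, by rw [hd, ht]; push_cast; ring⟩
  obtain ⟨s, ⟨hs, hs'⟩, -, hrec⟩ := hM x
  have hper := apply_add_mul_eq_of_locally_periodic (o := o) (x := x) (n := n)
    (sub_nonneg.2 hxy.le) (fun j hj hjn ↦ by
      rw [← orientation_add_eq_of_mem_markers hx hy hclose ((abs_of_nonneg hj).trans_le hjn)]
      congr 1
      ring) t (s - x) (by linarith) (by rw [← ht]; lia)
  rw [← ht, add_sub_cancel] at hper
  calc o (i + 2 * L.factorial) = o (s + 2 * L.factorial) := by
        simpa using (hrec (2 * L.factorial) ⟨by positivity, by simp⟩).symm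
    _ = o s := hper
    _ = o i := by simpa using hrec 0 ⟨le_rfl, by positivity⟩

end Markers

/-! ### The orientation of a labelling -/

section Labelling

variable {ρ : ℤ → Letter} {m m' : ℤ}

/-- The exponent of a letter. -/
def Letter.sign : Letter → ℤˣ
  | .a | .b => 1
  | .A | .B => -1

theorem Letter.sign_inv (ℓ : Letter) : ℓ.inv.sign = -ℓ.sign := by
  cases ℓ <;> rfl

/-- The orientation of the units determined by a labelling. -/
def orientation (ρ : ℤ → Letter) (m : ℤ) : ℤˣ := (ρ m).sign

theorem IsLabelling.even_iff (hρ : IsLabelling ρ) : Even m ↔ ρ m = .a ∨ ρ m = .A := by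
  refine ⟨(hρ m).1, fun h ↦ by_contra fun hm ↦ ?_⟩
  rcases (hρ m).2 (Int.not_even_iff_odd.1 hm) with h' | h' <;> simp [h'] at h

theorem IsLabelling.even_sub (hρ : IsLabelling ρ) (h : ρ m = ρ m' ∨ ρ m = (ρ m').inv) :
    Even (m - m') := by
  rw [Int.even_sub, hρ.even_iff, hρ.even_iff]
  rcases h with h | h <;> rw [h]
  cases ρ m' <;> simp [Letter.inv]

theorem getElem?_blockWord {n i : ℕ} (ρ : ℤ → Letter) (k : ℤ) (hi : i ≤ n) :
    (blockWord ρ k n)[i]? = some (ρ (k + i)) := by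
  unfold blockWord
  rw [bind_pure_comp, List.map_eq_map, List.getElem?_map, List.getElem?_map,
    List.getElem?_range (by lia)]
  rfl

theorem length_blockWord (ρ : ℤ → Letter) (k : ℤ) (n : ℕ) : (blockWord ρ k n).length = n + 1 := by
  simp [blockWord]

theorem exists_apply_add_eq_of_isInfix {k k' : ℤ} {n n' : ℕ}
    (h : blockWord ρ k n <:+: blockWord ρ k' n') :
    ∃ j : ℕ, n + j ≤ n' ∧ ∀ i : ℕ, i ≤ n → ρ (k' + j + i) = ρ (k + i) := by
  obtain ⟨j, hj, hget⟩ := List.infix_iff_getElem?.1 h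
  rw [length_blockWord, length_blockWord] at hj
  refine ⟨j, by lia, fun i hi ↦ ?_⟩
  have := hget i (by rw [length_blockWord]; lia)
  rw [← List.getElem?_eq_getElem, getElem?_blockWord ρ k hi, getElem?_blockWord ρ k' (by lia),
    Option.some_inj, add_comm i] at this
  rw [← this, Nat.cast_add, add_assoc]

theorem apply_add_eq_of_eq_wordInv {k k' : ℤ} {n i : ℕ}
    (h : blockWord ρ k' n = wordInv (blockWord ρ k n)) (hi : i ≤ n) :
    ρ (k' + i) = (ρ (k + n - i)).inv := by
  have := getElem?_blockWord ρ k' hi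
  rw [h, wordInv, List.getElem?_reverse (by rw [List.length_map, length_blockWord]; lia),
    List.length_map, length_blockWord, List.getElem?_map, getElem?_blockWord ρ k (by lia),
    Option.map_some, Option.some_inj] at this
  rw [← this, show k + n - i = k + (n + 1 - 1 - i : ℕ) by lia]

theorem IsQuasiPeriodic.isQuasiPeriodicOrientation (hρ : IsQuasiPeriodic ρ) :
    IsQuasiPeriodicOrientation (orientation ρ) := by
  obtain ⟨hlab, hrec, hrev⟩ := hρ
  refine ⟨fun k n ↦ ?_, fun k n ↦ ?_⟩
  · obtain ⟨N, hN⟩ := hrec k n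
    refine ⟨N, fun z ↦ ?_⟩
    obtain ⟨j, hj, h⟩ := exists_apply_add_eq_of_isInfix (hN z N (by lia))
    refine ⟨z + j, ⟨by lia, by lia⟩, hlab.even_sub (.inl (by simpa using h 0 (by lia))),
      fun i hi ↦ ?_⟩
    lift i to ℕ using hi.1
    rw [orientation, h i (by exact_mod_cast hi.2), orientation]
  · obtain ⟨k', hk'⟩ := hrev k n
    refine ⟨k', hlab.even_sub (.inr (by simpa using apply_add_eq_of_eq_wordInv hk' (i := 0))),
      fun i hi ↦ ?_⟩
    lift i to ℕ using hi.1
    rw [orientation, apply_add_eq_of_eq_wordInv hk' (by exact_mod_cast hi.2), Letter.sign_inv,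
      orientation]

end Labelling

/-! ### Compressing and displacing balls -/

section Chart

variable {o : ℤ → ℤˣ} {m p : ℤ} {u v ε : ℝ}

theorem dist_chart (o : ℤ → ℤˣ) (m : ℤ) (u : ℝ) : dist (chart o m u) (m / 2) = |u - 1 / 2| := by
  rw [Real.dist_eq, chart, add_sub_cancel_left, abs_mul, ← Int.cast_abs]
  rcases Int.units_eq_one_or (o m) with h | h <;> simp [h]

theorem chart_injective (o : ℤ → ℤˣ) (m : ℤ) : Function.Injective (chart o m) := fun u v h ↦ by
  rcases Int.units_eq_one_or (o m) with hm | hm <;> simpa [chart, hm] using h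

theorem chart_surjective (o : ℤ → ℤˣ) (m : ℤ) : Function.Surjective (chart o m) := fun z ↦ by
  refine ⟨1 / 2 + ((o m : ℤ) : ℝ) * (z - m / 2), ?_⟩
  rcases Int.units_eq_one_or (o m) with hm | hm <;> simp [chart, hm]

theorem chart_mem_closedBall :
    chart o m u ∈ Metric.closedBall (m / 2 : ℝ) (1 / 2 - ε) ↔ u ∈ Set.Icc ε (1 - ε) := by
  rw [Metric.mem_closedBall, dist_chart, abs_le, Set.mem_Icc]
  constructor <;> rintro ⟨h, h'⟩ <;> constructor <;> linarith

theorem exists_chart_eq (o : ℤ → ℤˣ) (p : ℤ) (z : ℝ) :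
    ∃ m, Even (m - p) ∧ ∃ u ∈ Set.Icc (0 : ℝ) 1, chart o m u = z := by
  set m := p + 2 * ⌊z - p / 2 + 1 / 2⌋ with hm
  obtain ⟨u, hu⟩ := chart_surjective o m z
  refine ⟨m, by simp [hm], u, ?_, hu⟩
  rw [← sub_zero (1 : ℝ), ← chart_mem_closedBall (o := o) (m := m), Metric.mem_closedBall,
    Real.dist_eq, sub_zero, abs_le, hu]
  have h1 := Int.floor_le (z - p / 2 + 1 / 2)
  have h2 := Int.lt_floor_add_one (z - p / 2 + 1 / 2)
  have hm' : (m : ℝ) / 2 = p / 2 + ⌊z - p / 2 + 1 / 2⌋ := by rw [hm]; push_cast; ring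
  rw [hm']
  constructor <;> linarith

end Chart

section Balls

/-- A pair `(m, d)` stands for the ball of centre `m / 2` and radius `d / 2`; this is the union of
the balls in `B`, each of them shrunk by `ε`. -/
def shrunkBalls (B : Set (ℤ × ℕ)) (ε : ℝ) : Set ℝ :=
  ⋃ b ∈ B, Metric.closedBall (b.1 / 2 : ℝ) (b.2 / 2 - ε)

variable {o : ℤ → ℤˣ} {B B' : Set (ℤ × ℕ)} {b b' : ℤ × ℕ} {ε ε' z : ℝ}

theorem mem_shrunkBalls :
    z ∈ shrunkBalls B ε ↔ ∃ b ∈ B, z ∈ Metric.closedBall (b.1 / 2 : ℝ) (b.2 / 2 - ε) := by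
  simp only [shrunkBalls, Set.mem_iUnion, exists_prop]

theorem shrunkBalls_anti (B : Set (ℤ × ℕ)) : Antitone (shrunkBalls B) := fun _ _ h ↦
  Set.iUnion₂_mono fun _ _ ↦ Metric.closedBall_subset_closedBall (by linarith)

theorem closedBall_subset_closedBall_half (h : (b.1 - b'.1).natAbs + b.2 ≤ b'.2) (ε : ℝ) :
    Metric.closedBall (b.1 / 2 : ℝ) (b.2 / 2 - ε) ⊆
      Metric.closedBall (b'.1 / 2 : ℝ) (b'.2 / 2 - ε) := by
  refine Metric.closedBall_subset_closedBall' ?_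
  have h' : |(b.1 : ℝ) - b'.1| + b.2 ≤ b'.2 := by
    rw [← Int.cast_sub, ← Int.cast_abs, Int.abs_eq_natAbs]
    exact_mod_cast h
  rw [Real.dist_eq, ← sub_div, abs_div, abs_two]
  linarith

/-- The elements supported in balls of `B` shrunk by some positive amount. -/
def ballStabilizer (B : Set (ℤ × ℕ)) : Subgroup (ℝ ≃o ℝ) where
  carrier := {f | ∃ ε > 0, f ∈ rigidStabilizer (shrunkBalls B ε)}
  mul_mem' := by
    rintro f g ⟨ε, hε, hf⟩ ⟨ε', hε', hg⟩
    exact ⟨min ε ε', lt_min hε hε', mul_mem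
      (rigidStabilizer_mono (shrunkBalls_anti B (min_le_left _ _)) hf)
      (rigidStabilizer_mono (shrunkBalls_anti B (min_le_right _ _)) hg)⟩
  one_mem' := ⟨1, one_pos, one_mem _⟩
  inv_mem' := by
    rintro f ⟨ε, hε, hf⟩
    exact ⟨ε, hε, inv_mem hf⟩

theorem ballStabilizer_le (h : ∀ b ∈ B, ∃ b' ∈ B', (b.1 - b'.1).natAbs + b.2 ≤ b'.2) :
    ballStabilizer B ≤ ballStabilizer B' := by
  rintro f ⟨ε, hε, hf⟩
  refine ⟨ε, hε, rigidStabilizer_mono (Set.iUnion₂_subset fun b hb ↦ ?_) hf⟩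
  obtain ⟨b', hb', hbb'⟩ := h b hb
  exact (closedBall_subset_closedBall_half hbb' ε).trans
    (Set.subset_biUnion_of_mem (u := fun b : ℤ × ℕ ↦ Metric.closedBall (b.1 / 2 : ℝ) (b.2 / 2 - ε))
      hb')

/-- The open balls `b` and `b'` are disjoint. -/
def BallsDisjoint (b b' : ℤ × ℕ) : Prop := b.2 + b'.2 ≤ |b.1 - b'.1|

theorem BallsDisjoint.symm (h : BallsDisjoint b b') : BallsDisjoint b' b := by
  rwa [BallsDisjoint, add_comm, abs_sub_comm]

theorem BallsDisjoint.notMem_closedBall (h : BallsDisjoint b b')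
    (hz : z ∈ Metric.closedBall (b.1 / 2 : ℝ) (b.2 / 2)) (hε : 0 < ε) :
    z ∉ Metric.closedBall (b'.1 / 2 : ℝ) (b'.2 / 2 - ε) := fun hz' ↦ by
  have h1 : ((b.2 : ℝ) + b'.2) / 2 ≤ dist (b.1 / 2 : ℝ) (b'.1 / 2) := by
    rw [Real.dist_eq, ← sub_div, abs_div, abs_two]
    have : ((b.2 + b'.2 : ℤ) : ℝ) ≤ |b.1 - b'.1| := by exact_mod_cast h
    push_cast at this
    linarith
  have h2 := dist_triangle_left (b.1 / 2 : ℝ) (b'.1 / 2) z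
  rw [Metric.mem_closedBall] at hz hz'
  linarith

theorem chart_mem_closedBall_of_one_le {u : ℝ} (hb : 1 ≤ b.2) (hu : u ∈ Set.Icc (0 : ℝ) 1) :
    chart o b.1 u ∈ Metric.closedBall (b.1 / 2 : ℝ) (b.2 / 2) := by
  have h : chart o b.1 u ∈ Metric.closedBall (b.1 / 2 : ℝ) (1 / 2 - 0) :=
    chart_mem_closedBall.2 (by simpa using hu)
  refine Metric.closedBall_subset_closedBall ?_ h
  have : (1 : ℝ) ≤ b.2 := by exact_mod_cast hb
  linarith

theorem BallsDisjoint.notMem_shrunkBalls (h : ∀ b' ∈ B, BallsDisjoint b b')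
    (hz : z ∈ Metric.closedBall (b.1 / 2 : ℝ) (b.2 / 2)) (hε : 0 < ε) : z ∉ shrunkBalls B ε := by
  rw [mem_shrunkBalls]
  rintro ⟨b', hb', hz'⟩
  exact (h b' hb').notMem_closedBall hz hε hz'

end Balls

section Compression

variable {o : ℤ → ℤˣ} {B B' : Set (ℤ × ℕ)} {G K : Subgroup (ℝ ≃o ℝ)} {S Y : Set ℤ}
  {f t : ℝ ≃o ℝ} {j k : ℕ} {p y : ℤ} {e ε : ℝ}

theorem ActsOnUnits.mem_rigidStabilizer_shrunkBalls
    (hf : ActsOnUnits o p (S.mulIndicator fun _ ↦ t) f)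
    (ht : t ∈ rigidStabilizer (Set.Icc ε (1 - ε))) :
    f ∈ rigidStabilizer (shrunkBalls (S ×ˢ {1}) ε) := by
  refine mem_rigidStabilizer.2 fun z hz ↦ ?_
  obtain ⟨m, hm, u, hu, rfl⟩ := exists_chart_eq o p z
  rw [hf m hm u hu]
  by_cases hS : m ∈ S
  · rw [Set.mulIndicator_of_mem hS, mem_rigidStabilizer.1 ht u fun hu' ↦ hz <| mem_shrunkBalls.2
      ⟨(m, 1), ⟨hS, rfl⟩, by simpa using chart_mem_closedBall.2 hu'⟩]
  · rw [Set.mulIndicator_of_notMem hS, RelIso.one_apply]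

/-- The balls of `B`, however little shrunk, can be mapped by a single element of `G` into any
prescribed part of their central units. -/
def IsCompressible (o : ℤ → ℤˣ) (G : Subgroup (ℝ ≃o ℝ)) (B : Set (ℤ × ℕ)) : Prop :=
  ∀ ε > 0, ∀ γ δ : ℝ, 0 ≤ γ → γ < δ → δ ≤ 1 → ∃ h ∈ G ⊓ ballStabilizer B, ∀ b ∈ B,
    Set.MapsTo h (Metric.closedBall (b.1 / 2 : ℝ) (b.2 / 2 - ε)) (chart o b.1 '' Set.Ioo γ δ)

theorem IsCompressible.union (hB : IsCompressible o G B) (hB' : IsCompressible o G B')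
    (hpos : ∀ b ∈ B', 1 ≤ b.2) (hdisj : ∀ b ∈ B, ∀ b' ∈ B', BallsDisjoint b b') :
    IsCompressible o G (B ∪ B') := by
  intro ε hε γ δ hγ hγδ hδ
  obtain ⟨h, ⟨hG, η, hη, hstab⟩, hmaps⟩ := hB ε hε γ δ hγ hγδ hδ
  obtain ⟨h', ⟨hG', η', hη', hstab'⟩, hmaps'⟩ := hB' ε hε γ δ hγ hγδ hδ
  refine ⟨h * h', mul_mem ⟨hG, ?_⟩ ⟨hG', ?_⟩, ?_⟩
  · exact ballStabilizer_le (fun b hb ↦ ⟨b, .inl hb, by simp⟩) ⟨η, hη, hstab⟩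
  · exact ballStabilizer_le (fun b hb ↦ ⟨b, .inr hb, by simp⟩) ⟨η', hη', hstab'⟩
  rintro b (hb | hb) z hz <;> rw [RelIso.mul_apply]
  · rw [mem_rigidStabilizer.1 hstab' z]
    · exact hmaps b hb hz
    · exact BallsDisjoint.notMem_shrunkBalls (hdisj b hb)
        (Metric.closedBall_subset_closedBall (by linarith) hz) hη'
  · obtain ⟨u, hu, hzu⟩ := hmaps' b hb hz
    rw [← hzu, mem_rigidStabilizer.1 hstab]
    · exact ⟨u, hu, rfl⟩
    · exact BallsDisjoint.notMem_shrunkBalls (fun b' hb' ↦ (hdisj b' hb' b hb).symm)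
        (chart_mem_closedBall_of_one_le (hpos b hb)
          ⟨hγ.trans hu.1.le, hu.2.le.trans hδ⟩) hη

theorem IsSelectable.isCompressible_one (hK : IsCompactlyTransitive K) (hY : IsSelectable o G K Y)
    (hp : ∀ y ∈ Y, Even (y - p)) : IsCompressible o G (Y ×ˢ {1}) := by
  intro ε hε γ δ hγ hγδ hδ
  set e := min ε (1 / 4)
  have he : 0 < e := lt_min hε (by norm_num)
  have he' : e ≤ 1 / 4 := min_le_right _ _
  have heε : e ≤ ε := min_le_left _ _
  obtain ⟨t, ht, hγt, htδ⟩ := hK.commutator.exists_compress he (b := 1 - e) (by linarith)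
    (by linarith) hγ hγδ hδ
  obtain ⟨η, hη, -, htη⟩ := hK.commutator.exists_mem_rigidStabilizer t ht
  obtain ⟨f, hf, hft⟩ := hY p t ht
  refine ⟨f, ⟨hf, η, hη, hft.mem_rigidStabilizer_shrunkBalls htη⟩, ?_⟩
  rintro ⟨y, -⟩ ⟨hy, rfl⟩ z hz
  obtain ⟨u, rfl⟩ := chart_surjective o y z
  have hu : u ∈ Set.Icc e (1 - e) := chart_mem_closedBall.1 <|
    Metric.closedBall_subset_closedBall (by push_cast; linarith) hz
  rw [hft y (hp y hy) u ⟨he.le.trans hu.1, by linarith [hu.2]⟩, Set.mulIndicator_of_mem hy]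
  exact ⟨t u, ⟨hγt.trans_le (t.monotone hu.1), (t.monotone hu.2).trans_lt htδ⟩, rfl⟩

theorem even_add_units_mul_sub (h : Even (y - p)) (σ : ℤˣ) (j : ℤ) :
    Even (y + σ * j - (p + j)) := by
  rcases Int.units_eq_one_or σ with rfl | rfl
  · simpa using h
  · rw [show y + ((-1 : ℤˣ) : ℤ) * j - (p + j) = y - p - 2 * j by push_cast; ring]
    exact h.sub (even_two_mul _)

/-- The outermost unit of a ball, if it is oriented towards the centre, belongs to the first set,
and otherwise to the second one. -/
theorem ActsOnUnits.exists_apply_endpoint {t₁ t₂ : ℝ ≃o ℝ}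
    (hf : ActsOnUnits o (p + j) ({m | neighbour o j m ∈ Y}.mulIndicator (fun _ ↦ t₁) *
      {m | neighbour o (-j) m ∈ Y}.mulIndicator fun _ ↦ t₂) f)
    (hy : y ∈ Y) (hp : Even (y - p)) (σ : ℤˣ) (hσ : y + 2 * (σ * j) ∉ Y)
    (he : e ∈ Set.Icc (0 : ℝ) 1) :
    ∃ w ∈ ({t₁ e - 1 / 2, 1 / 2 - t₂ (1 - e)} : Set ℝ),
      f (y / 2 + ((σ : ℤ) : ℝ) * ((j + 1) / 2 - e)) = y / 2 + ((σ : ℤ) : ℝ) * (j / 2 - w) := by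
  set m : ℤ := y + σ * j with hm
  have hmp : Even (m - (p + j)) := even_add_units_mul_sub hp σ j
  by_cases hom : o m = σ
  · have h1 : neighbour o (-j) m = y := by
      rw [neighbour, hom, hm]
      ring
    have h2 : neighbour o j m = y + 2 * (σ * j) := by
      rw [neighbour, hom, hm]
      ring
    have hν := hf m hmp (1 - e) ⟨by linarith [he.2], by linarith [he.1]⟩
    rw [Pi.mul_apply, Set.mulIndicator_of_notMem (by simpa [h2] using hσ),
      Set.mulIndicator_of_mem (by simpa [h1] using hy), one_mul, chart, chart, hom, hm] at hν
    refine ⟨1 / 2 - t₂ (1 - e), .inr rfl, ?_⟩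
    push_cast at hν
    rw [show (y + (σ : ℤ) * j) / 2 + (σ : ℤ) * (1 - e - 1 / 2) =
      y / 2 + ((σ : ℤ) : ℝ) * ((j + 1) / 2 - e) by ring] at hν
    rw [hν]
    ring
  · have hom' : o m = -σ := Int.units_ne_iff_eq_neg.1 hom
    have h1 : neighbour o j m = y := by
      rw [neighbour, hom', hm]
      push_cast
      ring
    have h2 : neighbour o (-j) m = y + 2 * (σ * j) := by
      rw [neighbour, hom', hm]
      push_cast
      ring
    have hν := hf m hmp e he
    rw [Pi.mul_apply, Set.mulIndicator_of_mem (by simpa [h1] using hy),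
      Set.mulIndicator_of_notMem (by simpa [h2] using hσ), mul_one, chart, chart, hom', hm] at hν
    refine ⟨t₁ e - 1 / 2, .inl rfl, ?_⟩
    push_cast at hν
    rw [show (y + (σ : ℤ) * j) / 2 + -(σ : ℤ) * (e - 1 / 2) =
      y / 2 + ((σ : ℤ) : ℝ) * ((j + 1) / 2 - e) by ring] at hν
    rw [hν]
    ring

theorem ActsOnUnits.mem_ballStabilizer_of_neighbour {i : ℤ} (hK : IsCompactlyTransitive K)
    (ht : t ∈ K) (hf : ActsOnUnits o p ({m | neighbour o i m ∈ Y}.mulIndicator fun _ ↦ t) f)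
    (hi : i.natAbs = j) : f ∈ ballStabilizer (Y ×ˢ {j + 1}) := by
  obtain ⟨η, hη, -, htη⟩ := hK.exists_mem_rigidStabilizer t ht
  refine ballStabilizer_le ?_ ⟨η, hη, hf.mem_rigidStabilizer_shrunkBalls htη⟩
  rintro ⟨m, d⟩ ⟨hm, rfl⟩
  refine ⟨(neighbour o i m, j + 1), ⟨hm, rfl⟩, ?_⟩
  simp [neighbour, Int.natAbs_mul, hi]

/-- The outermost units of the balls of radius `(j + 1) / 2` are pushed inwards. -/
theorem IsSelectable.exists_mapsTo_closedBall (hK : IsDyadicBumpGroup K)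
    (hG : ContainsUnitActions o G K) (hY : IsSelectable o G K Y) (hp : ∀ y ∈ Y, Even (y - p))
    (hgap : ∀ y ∈ Y, ∀ σ : ℤˣ, y + 2 * (σ * j) ∉ Y) (hε : 0 < ε) :
    ∃ f ∈ G ⊓ ballStabilizer (Y ×ˢ {j + 1}), ∃ ε' > 0, ∀ y ∈ Y, Set.MapsTo f
      (Metric.closedBall (y / 2 : ℝ) ((j + 1) / 2 - ε))
      (Metric.closedBall (y / 2) (j / 2 - ε')) := by
  have hK' := hK.isCompactlyTransitive
  have hK'' := hK'.commutator
  set e := min ε (1 / 4)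
  have he : 0 < e := lt_min hε (by norm_num)
  have he' : e ≤ 1 / 4 := min_le_right _ _
  have heε : e ≤ ε := min_le_left _ _
  obtain ⟨t₁, ht₁, h₁, -⟩ := hK''.exists_compress he le_rfl (by linarith) (c := 1 / 2) (d := 1)
    (by norm_num) (by norm_num) le_rfl
  obtain ⟨t₂, ht₂, -, h₂⟩ := hK''.exists_compress (a := 1 - e) (by linarith) le_rfl (by linarith)
    (c := 0) (d := 1 / 2) le_rfl (by norm_num) (by norm_num)
  obtain ⟨f₁, hf₁G, hf₁⟩ := hY.neighbour_mem hK hG j (p + j) t₁ ht₁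
  obtain ⟨f₂, hf₂G, hf₂⟩ := hY.neighbour_mem hK hG (-j) (p + j) t₂ ht₂
  have hf := hf₁.mul hf₂ (mulIndicator_const_mem _ (hK''.le_rigidStabilizer ht₂))
  refine ⟨f₁ * f₂, ⟨mul_mem hf₁G hf₂G, mul_mem
    (hf₁.mem_ballStabilizer_of_neighbour hK'' ht₁ (by simp))
    (hf₂.mem_ballStabilizer_of_neighbour hK'' ht₂ (by simp))⟩,
    min (t₁ e - 1 / 2) (1 / 2 - t₂ (1 - e)), lt_min (by linarith) (by linarith), ?_⟩
  intro y hy z hz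
  have hend (σ : ℤˣ) := hf.exists_apply_endpoint hy (hp y hy) σ (hgap y hy σ)
    (e := e) ⟨he.le, by linarith⟩
  obtain ⟨w, hw, hright⟩ := hend 1
  obtain ⟨w', hw', hleft⟩ := hend (-1)
  have hmin {w} (hw : w ∈ ({t₁ e - 1 / 2, 1 / 2 - t₂ (1 - e)} : Set ℝ)) :
      min (t₁ e - 1 / 2) (1 / 2 - t₂ (1 - e)) ≤ w := by
    rcases hw with rfl | rfl
    exacts [min_le_left _ _, min_le_right _ _]
  rw [Metric.mem_closedBall, Real.dist_eq, abs_le] at hz ⊢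
  push_cast at hright hleft
  have hmono := (f₁ * f₂).monotone
  have hr := hmono (show z ≤ y / 2 + 1 * ((j + 1) / 2 - e) by linarith)
  have hl := hmono (show y / 2 + -1 * ((j + 1) / 2 - e) ≤ z by linarith)
  rw [hright] at hr
  rw [hleft] at hl
  constructor <;> linarith [hmin hw, hmin hw']

theorem IsCompressible.succ (hK : IsDyadicBumpGroup K) (hG : ContainsUnitActions o G K)
    (hY : IsSelectable o G K Y) (hp : ∀ y ∈ Y, Even (y - p))
    (hgap : ∀ y ∈ Y, ∀ σ : ℤˣ, y + 2 * (σ * j) ∉ Y) (h : IsCompressible o G (Y ×ˢ {j})) :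
    IsCompressible o G (Y ×ˢ {j + 1}) := by
  intro ε hε γ δ hγ hγδ hδ
  obtain ⟨f, hf, ε', hε', hmaps⟩ := hY.exists_mapsTo_closedBall hK hG hp hgap hε
  obtain ⟨g, ⟨hg, hgB⟩, hmaps'⟩ := h ε' hε' γ δ hγ hγδ hδ
  have hgB' : g ∈ ballStabilizer (Y ×ˢ {j + 1}) :=
    ballStabilizer_le (by rintro ⟨y, _⟩ ⟨hy, rfl⟩; exact ⟨(y, _ + 1), ⟨hy, rfl⟩, by simp⟩) hgB
  refine ⟨g * f, mul_mem ⟨hg, hgB'⟩ hf, ?_⟩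
  rintro ⟨y, -⟩ ⟨hy, rfl⟩
  simpa using (hmaps' (y, j) ⟨hy, rfl⟩).comp (hmaps y hy)

theorem IsSelectable.isCompressible (hK : IsDyadicBumpGroup K) (hG : ContainsUnitActions o G K)
    (hY : IsSelectable o G K Y) (hp : ∀ y ∈ Y, Even (y - p)) (hj : 1 ≤ j)
    (hgap : (Y ×ˢ {j}).Pairwise BallsDisjoint) : IsCompressible o G (Y ×ˢ {j}) := by
  suffices ∀ i, 1 ≤ i → i ≤ j → IsCompressible o G (Y ×ˢ {i}) from this j hj le_rfl
  intro i hi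
  induction i, hi using Nat.le_induction with
  | base => exact fun _ ↦ hY.isCompressible_one hK.isCompactlyTransitive hp
  | succ i hi ih =>
    intro hij
    refine (ih (by omega)).succ hK hG hY hp fun y hy σ hy' ↦ ?_
    have h := hgap (x := (y, j)) ⟨hy, rfl⟩ (y := (y + 2 * (σ * i), j)) ⟨hy', rfl⟩
    rcases Int.units_eq_one_or σ with rfl | rfl <;> simp [BallsDisjoint] at h <;> omega

end Compression

section BallSystem

/-- A system of disjoint balls, of finitely many sizes, such that `G` can act on the balls of any
given size simultaneously. -/
structure IsBallSystem (o : ℤ → ℤˣ) (G K : Subgroup (ℝ ≃o ℝ)) (B : Set (ℤ × ℕ)) : Prop where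
  isSelectable : ∀ d, IsSelectable o G K {m | (m, d) ∈ B}
  exists_even_sub : ∀ d, ∃ p, ∀ m, (m, d) ∈ B → Even (m - p)
  one_le : ∀ b ∈ B, 1 ≤ b.2
  exists_le : ∃ N, ∀ b ∈ B, b.2 ≤ N
  pairwise_disjoint : B.Pairwise BallsDisjoint

namespace IsBallSystem

variable {o : ℤ → ℤˣ} {G K : Subgroup (ℝ ≃o ℝ)} {B : Set (ℤ × ℕ)} {ε : ℝ}

theorem isCompressible (hK : IsDyadicBumpGroup K) (hG : ContainsUnitActions o G K)
    (hB : IsBallSystem o G K B) : IsCompressible o G B := by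
  have main (N : ℕ) : IsCompressible o G {b ∈ B | b.2 ≤ N} := by
    induction N with
    | zero =>
      refine fun _ _ _ _ _ _ _ ↦ ⟨1, one_mem _, fun b hb ↦ ?_⟩
      have := hB.one_le b hb.1
      have := hb.2
      omega
    | succ N ih =>
      have hsplit : {b ∈ B | b.2 ≤ N + 1} =
          {b ∈ B | b.2 ≤ N} ∪ {m | (m, N + 1) ∈ B} ×ˢ {N + 1} := by
        ext ⟨m, d⟩
        simp only [Set.mem_ofPred_eq, Set.mem_union, Set.mem_prod, Set.mem_singleton_iff]
        grind
      have hmem : ∀ b ∈ {m | (m, N + 1) ∈ B} ×ˢ {N + 1}, b ∈ B ∧ b.2 = N + 1 := by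
        rintro ⟨m, _⟩ ⟨h, rfl⟩
        exact ⟨h, rfl⟩
      obtain ⟨p, hp⟩ := hB.exists_even_sub (N + 1)
      rw [hsplit]
      refine ih.union ((hB.isSelectable (N + 1)).isCompressible hK hG hp (by omega)
        (hB.pairwise_disjoint.mono fun b hb ↦ (hmem b hb).1)) (fun b hb ↦ by
        rw [(hmem b hb).2]; omega) fun b hb b' hb' ↦ ?_
      refine hB.pairwise_disjoint hb.1 (hmem b' hb').1 ?_
      rintro rfl
      have := hb.2
      have := (hmem b hb').2
      omega
  obtain ⟨N, hN⟩ := hB.exists_le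
  have hBN : {b ∈ B | b.2 ≤ N} = B := Set.sep_eq_self_iff_mem_true.2 hN
  exact hBN ▸ main N

/-- Compress every ball into two disjoint parts of its central unit. -/
theorem exists_displacement (hK : IsDyadicBumpGroup K) (hG : ContainsUnitActions o G K)
    (hB : IsBallSystem o G K B) (hε : 0 < ε) :
    ∃ t ∈ G ⊓ ballStabilizer B, ∀ z ∈ shrunkBalls B ε, t z ∉ shrunkBalls B ε := by
  obtain ⟨h₁, hh₁, hmaps₁⟩ := hB.isCompressible hK hG ε hε 0 (1 / 2) le_rfl (by norm_num)
    (by norm_num)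
  obtain ⟨h₂, hh₂, hmaps₂⟩ := hB.isCompressible hK hG ε hε (1 / 2) (3 / 4) (by norm_num)
    (by norm_num) (by norm_num)
  refine ⟨h₂⁻¹ * h₁, mul_mem (inv_mem hh₂) hh₁, fun z hz hz' ↦ ?_⟩
  obtain ⟨b, hb, hzb⟩ := mem_shrunkBalls.1 hz
  obtain ⟨b', hb', hzb'⟩ := mem_shrunkBalls.1 hz'
  obtain ⟨u, hu, huz⟩ := hmaps₁ b hb hzb
  obtain ⟨v, hv, hvz⟩ := hmaps₂ b' hb' hzb'
  rw [RelIso.mul_apply, RelIso.apply_inv_self, ← huz] at hvz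
  by_cases hbb' : b = b'
  · subst hbb'
    exact (hu.2.trans hv.1).ne' (chart_injective o b.1 hvz)
  · refine (hB.pairwise_disjoint hb hb' hbb').notMem_closedBall
      (chart_mem_closedBall_of_one_le (o := o) (hB.one_le b hb) ⟨hu.1.le, by linarith [hu.2]⟩)
      (ε := 1 / 4) (by norm_num) ?_
    have h1 : (1 : ℝ) ≤ b'.2 := by exact_mod_cast hB.one_le b' hb'
    have hv' : chart o b'.1 v ∈ Metric.closedBall (b'.1 / 2 : ℝ) (1 / 2 - 1 / 4) :=
      chart_mem_closedBall.2 ⟨by linarith [hv.1], by linarith [hv.2]⟩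
    exact hvz ▸ Metric.closedBall_subset_closedBall (by linarith) hv'

theorem homogeneousCocyclesVanishOn (hK : IsDyadicBumpGroup K) (hG : ContainsUnitActions o G K)
    (hB : IsBallSystem o G K B) :
    HomogeneousCocyclesVanishOn ((ballStabilizer B).subgroupOf G : Set G) := by
  refine homogeneousCocyclesVanishOn_of_doubling _ fun f ⟨ε, hε, hf⟩ g ⟨ε', hε', hg⟩ ↦ ?_
  obtain ⟨t, ⟨htG, htB⟩, hdisp⟩ := hB.exists_displacement hK hG (lt_min hε hε')
  have hsupp : ∀ x ∈ ({f, g} : Set G),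
      (x : ℝ ≃o ℝ) ∈ rigidStabilizer (shrunkBalls B (min ε ε')) := by
    rintro x (rfl | rfl)
    · exact rigidStabilizer_mono (shrunkBalls_anti B (min_le_left _ _)) hf
    · exact rigidStabilizer_mono (shrunkBalls_anti B (min_le_right _ _)) hg
  refine ⟨⟨t, htG⟩, fun x hx y hy ↦ ?_, fun x hx ↦ ?_⟩
  · exact Subtype.ext <| commute_of_mem_rigidStabilizer (hsupp x hx)
      (conj_mem_rigidStabilizer (hsupp y hy) hdisp) disjoint_compl_right
  · have hxB : (x : ℝ ≃o ℝ) ∈ ballStabilizer B := ⟨_, lt_min hε hε', hsupp x hx⟩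
    exact mul_mem hxB (mul_mem (mul_mem htB hxB) (inv_mem htB))

end IsBallSystem

end BallSystem

/-! ### Balls around and between markers -/

section Tubes

/-- The closed `r`-neighbourhood of the centres of the units in `X`. -/
def tube (X : Set ℤ) (r : ℝ) : Set ℝ := ⋃ x ∈ X, Metric.closedBall (x / 2 : ℝ) r

/-- The balls whose diameter is spanned by two consecutive elements of `X`, encoded as in
`shrunkBalls`. -/
def gaps (X : Set ℤ) : Set (ℤ × ℕ) :=
  {b | 1 ≤ b.2 ∧ b.1 - b.2 ∈ X ∧ b.1 + b.2 ∈ X ∧ ∀ i ∈ Finset.Ioo (-b.2 : ℤ) b.2, b.1 + i ∉ X}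

variable {o : ℤ → ℤˣ} {G K : Subgroup (ℝ ≃o ℝ)} {X : Set ℤ} {D L : ℕ} {m : ℤ} {d : ℕ}
  {r s z ε : ℝ}

theorem mem_tube : z ∈ tube X r ↔ ∃ x ∈ X, z ∈ Metric.closedBall (x / 2 : ℝ) r := by
  simp only [tube, Set.mem_iUnion, exists_prop]

theorem tube_mono (X : Set ℤ) : Monotone (tube X) := fun _ _ h ↦
  Set.iUnion₂_mono fun _ _ ↦ Metric.closedBall_subset_closedBall h

theorem shrunkBalls_prod_singleton (X : Set ℤ) (D : ℕ) (ε : ℝ) :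
    shrunkBalls (X ×ˢ {D}) ε = tube X (D / 2 - ε) := by
  ext z
  simp [mem_shrunkBalls, mem_tube]

theorem rigidStabilizer_tube_le_ballStabilizer (hs : s < D / 2) :
    rigidStabilizer (tube X s) ≤ ballStabilizer (X ×ˢ {D}) := fun f hf ↦
  ⟨D / 2 - s, sub_pos.2 hs, by rwa [shrunkBalls_prod_singleton, sub_sub_cancel]⟩

theorem ballStabilizer_prod_singleton_le (X : Set ℤ) (D : ℕ) :
    ballStabilizer (X ×ˢ {D}) ≤ rigidStabilizer (tube X (D / 2)) := fun _ ⟨_, hε, hf⟩ ↦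
  rigidStabilizer_mono (shrunkBalls_prod_singleton X D _ ▸ tube_mono X (by linarith)) hf

theorem pairwise_ballsDisjoint_prod_singleton
    (hgap : X.Pairwise fun x y ↦ 2 * (D : ℤ) ≤ |x - y|) :
    (X ×ˢ {D}).Pairwise BallsDisjoint := by
  rintro ⟨x, _⟩ ⟨hx, rfl⟩ ⟨y, _⟩ ⟨hy, rfl⟩ hxy
  simpa [BallsDisjoint, two_mul] using hgap hx hy (by simpa using hxy)

theorem IsSelectable.isBallSystem_prod_singleton (hK : IsCompactlyTransitive K)
    (hG : ContainsUnitActions o G K) (hX : IsSelectable o G K X) (hev : ∀ x ∈ X, Even x)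
    (hD : 1 ≤ D) (hgap : X.Pairwise fun x y ↦ 2 * (D : ℤ) ≤ |x - y|) :
    IsBallSystem o G K (X ×ˢ {D}) where
  isSelectable d := by
    by_cases hd : d = D
    · simpa [hd] using hX
    · simpa [hd] using (IsSelectable.univ hG).compl hK hG
  exists_even_sub d := ⟨0, fun m hm ↦ by simpa using hev m hm.1⟩
  one_le := by
    rintro ⟨m, _⟩ ⟨-, rfl⟩
    exact hD
  exists_le := ⟨D, fun b hb ↦ hb.2.le⟩
  pairwise_disjoint := pairwise_ballsDisjoint_prod_singleton hgap

theorem isSelectable_gaps (hK : IsDyadicBumpGroup K) (hG : ContainsUnitActions o G K)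
    (hX : IsSelectable o G K X) (d : ℕ) : IsSelectable o G K {m | (m, d) ∈ gaps X} := by
  have hK' := hK.isCompactlyTransitive
  rcases Nat.eq_zero_or_pos d with rfl | hd
  · simpa [gaps] using (IsSelectable.univ hG).compl hK' hG
  convert ((hX.neighbour_mem hK hG d).inter hK' hG (hX.neighbour_mem hK hG (-d))).inter hK' hG
    (IsSelectable.forall_mem_finset hK hG (Finset.Ioo (-d : ℤ) d) fun i _ ↦
      (hX.neighbour_mem hK hG i).compl hK' hG) using 1
  ext m
  have hneg : (∀ i ∈ Finset.Ioo (-d : ℤ) d, m - i ∉ X) ↔ ∀ i ∈ Finset.Ioo (-d : ℤ) d, m + i ∉ X :=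
    ⟨fun h i hi ↦ by simpa using h (-i) (by simp at hi ⊢; omega),
      fun h i hi ↦ h (-i) (by simp at hi ⊢; omega)⟩
  rcases Int.units_eq_one_or (o m) with hm | hm
  · simp only [gaps, neighbour, hm, Set.mem_ofPred_eq, Set.mem_inter_iff, Set.mem_compl_iff,
      Units.val_one, mul_one, ← sub_eq_add_neg]
    tauto
  · simp only [gaps, neighbour, hm, Set.mem_ofPred_eq, Set.mem_inter_iff, Set.mem_compl_iff,
      Units.val_one, Units.val_neg, mul_one, mul_neg, neg_neg, ← sub_eq_add_neg, hneg]
    tauto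

theorem pairwise_ballsDisjoint_gaps (X : Set ℤ) : (gaps X).Pairwise BallsDisjoint := by
  rintro ⟨m, d⟩ ⟨_, hl, hr, hX⟩ ⟨m', d'⟩ ⟨_, hl', hr', hX'⟩ hne
  by_contra hcon
  rw [BallsDisjoint, not_le, abs_lt] at hcon
  have hout {x} (hx : x ∈ X) : ¬ (-(d : ℤ) < x - m ∧ x - m < d) := fun h ↦
    hX (x - m) (Finset.mem_Ioo.2 h) (by simpa using hx)
  have hout' {x} (hx : x ∈ X) : ¬ (-(d' : ℤ) < x - m' ∧ x - m' < d') := fun h ↦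
    hX' (x - m') (Finset.mem_Ioo.2 h) (by simpa using hx)
  have h1 := hout hl'
  have h2 := hout hr'
  have h3 := hout' hl
  have h4 := hout' hr
  simp only [ne_eq, Prod.mk.injEq] at *
  omega

theorem IsSelectable.isBallSystem_gaps (hK : IsDyadicBumpGroup K) (hG : ContainsUnitActions o G K)
    (hX : IsSelectable o G K X) (hev : ∀ x ∈ X, Even x)
    (hL : ∀ z : ℤ, ∃ x ∈ X, z ≤ x ∧ x ≤ z + L) : IsBallSystem o G K (gaps X) where
  isSelectable := isSelectable_gaps hK hG hX
  exists_even_sub d := ⟨d, fun m hm ↦ hev _ hm.2.1⟩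
  one_le b hb := hb.1
  exists_le := by
    refine ⟨L, ?_⟩
    rintro ⟨m, d⟩ ⟨-, -, -, hX⟩
    by_contra! hLd
    obtain ⟨x, hx, h1, h2⟩ := hL m
    exact hX (x - m) (Finset.mem_Ioo.2 (by lia)) (by simpa using hx)
  pairwise_disjoint := pairwise_ballsDisjoint_gaps X

theorem exists_mem_gaps (hev : ∀ x ∈ X, Even x) (hL : ∀ z : ℤ, ∃ x ∈ X, z ≤ x ∧ x ≤ z + L)
    (n : ℤ) : ∃ b ∈ gaps X, b.1 - b.2 ≤ n ∧ n < b.1 + b.2 := by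
  obtain ⟨x₀, hx₀, -, hx₀n⟩ := hL (n - L)
  obtain ⟨y₀, hy₀, hny₀, -⟩ := hL (n + 1)
  obtain ⟨x, ⟨hx, hxn⟩, hmax⟩ := Int.exists_greatest_of_bdd (P := fun x ↦ x ∈ X ∧ x ≤ n)
    ⟨n, fun x hx ↦ hx.2⟩ ⟨x₀, hx₀, by lia⟩
  obtain ⟨y, ⟨hy, hny⟩, hmin⟩ := Int.exists_least_of_bdd (P := fun y ↦ y ∈ X ∧ n < y)
    ⟨n, fun y hy ↦ hy.2.le⟩ ⟨y₀, hy₀, by lia⟩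
  obtain ⟨a, rfl⟩ := hev x hx
  obtain ⟨b, rfl⟩ := hev y hy
  obtain ⟨d, hd⟩ := Int.eq_ofNat_of_zero_le (a := b - a) (by lia)
  obtain rfl : b = a + d := by lia
  refine ⟨(a + (a + d), d), ⟨by lia, by convert hx using 1; ring, by convert hy using 1; ring,
    fun i hi hX ↦ ?_⟩, by lia, by lia⟩
  rw [Finset.mem_Ioo] at hi
  rcases le_or_gt (a + (a + d) + i) n with h | h
  · have := hmax _ ⟨hX, h⟩
    lia
  · have := hmin _ ⟨hX, h⟩
    lia

theorem compl_tube_subset_shrunkBalls_gaps (hev : ∀ x ∈ X, Even x)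
    (hL : ∀ z : ℤ, ∃ x ∈ X, z ≤ x ∧ x ≤ z + L) (ε : ℝ) :
    (tube X ε)ᶜ ⊆ shrunkBalls (gaps X) ε := fun z hz ↦ by
  obtain ⟨⟨m, d⟩, hb, h1, h2⟩ := exists_mem_gaps hev hL ⌊2 * z⌋
  have hfar {x} (hx : x ∈ X) : ε < |z - x / 2| := not_le.1 fun h ↦ hz (mem_tube.2 ⟨x, hx, h⟩)
  have hl := hfar hb.2.1
  have hr := hfar hb.2.2.1
  have h1' : ((m - d : ℤ) : ℝ) ≤ 2 * z := Int.le_floor.1 h1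
  have h2' : 2 * z < ((m + d : ℤ) : ℝ) := Int.floor_lt.1 h2
  rw [abs_of_nonneg (by linarith)] at hl
  rw [abs_of_nonpos (by linarith)] at hr
  push_cast at hl hr
  refine mem_shrunkBalls.2 ⟨_, hb, ?_⟩
  rw [Metric.mem_closedBall, Real.dist_eq, abs_le]
  constructor <;> linarith

theorem rigidStabilizer_compl_tube_le_ballStabilizer (hev : ∀ x ∈ X, Even x)
    (hL : ∀ z : ℤ, ∃ x ∈ X, z ≤ x ∧ x ≤ z + L) (hε : 0 < ε) :
    rigidStabilizer (tube X ε)ᶜ ≤ ballStabilizer (gaps X) := fun _ hf ↦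
  ⟨ε, hε, rigidStabilizer_mono (compl_tube_subset_shrunkBalls_gaps hev hL ε) hf⟩

end Tubes

/-! ### Cutting elements off away from sparse sets of units -/

section Localization

/-- The homeomorphisms of the line at bounded distance from the identity. -/
def boundedDisplacement : Subgroup (ℝ ≃o ℝ) where
  carrier := {f | ∃ M : ℕ, ∀ z, dist (f z) z ≤ M}
  mul_mem' := by
    rintro f g ⟨M, hf⟩ ⟨M', hg⟩
    refine ⟨M + M', fun z ↦ (dist_triangle _ (g z) _).trans ?_⟩
    exact_mod_cast add_le_add (hf (g z)) (hg z)
  one_mem' := ⟨0, fun z ↦ by simp⟩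
  inv_mem' := by
    rintro f ⟨M, hf⟩
    exact ⟨M, fun z ↦ by simpa [dist_comm] using hf (f⁻¹ z)⟩

variable {o : ℤ → ℤˣ} {G K : Subgroup (ℝ ≃o ℝ)} {X Y : Set ℤ} {f g ν : ℝ ≃o ℝ} {p : ℤ}
  {r z γ δ : ℝ} {M : ℕ}

theorem apply_mem_tube (hf : ∀ z, dist (f z) z ≤ M) (hz : z ∈ tube X r) :
    f z ∈ tube X (r + M) := by
  obtain ⟨x, hx, hzx⟩ := mem_tube.1 hz
  exact mem_tube.2 ⟨x, hx, (dist_triangle_left _ _ z).trans <|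
    (add_le_add (dist_comm z (f z) ▸ hf z) hzx).trans_eq (add_comm _ _)⟩

theorem tube_subset_tube (h : ∀ x ∈ X, ∃ y ∈ Y, |x - y| ≤ 1) (r : ℝ) :
    tube X r ⊆ tube Y (r + 1 / 2) := fun z hz ↦ by
  obtain ⟨x, hx, hzx⟩ := mem_tube.1 hz
  obtain ⟨y, hy, hxy⟩ := h x hx
  refine mem_tube.2 ⟨y, hy, Metric.closedBall_subset_closedBall' ?_ hzx⟩
  have h' : |(x : ℝ) - y| ≤ 1 := by exact_mod_cast hxy
  rw [Real.dist_eq, ← sub_div, abs_div, abs_two]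
  linarith

/-- For every sufficiently sparse selectable set `X` of units, some element of `G` agrees with `f`
near the centres of these units and is supported in a larger neighbourhood of them. -/
def IsLocalizable (o : ℤ → ℤˣ) (G K : Subgroup (ℝ ≃o ℝ)) (f : ℝ ≃o ℝ) : Prop :=
  ∀ r : ℕ, ∃ R : ℕ, ∀ X : Set ℤ, IsSelectable o G K X → (∀ x ∈ X, Even x) →
    (X.Pairwise fun x y ↦ (R : ℤ) < |x - y|) →
      ∃ a ∈ G ⊓ rigidStabilizer (tube X R), Set.EqOn a f (tube X r)

/-- The localizable elements of bounded displacement. -/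
def localizableSubgroup (o : ℤ → ℤˣ) (G K : Subgroup (ℝ ≃o ℝ)) : Subgroup (ℝ ≃o ℝ) where
  carrier := {f | f ∈ boundedDisplacement ∧ IsLocalizable o G K f}
  mul_mem' := by
    rintro f g ⟨hfD, hf⟩ ⟨hgD, hg⟩
    refine ⟨mul_mem hfD hgD, fun r ↦ ?_⟩
    obtain ⟨M, hM⟩ := hgD
    obtain ⟨R, hR⟩ := hf (r + M)
    obtain ⟨R', hR'⟩ := hg r
    refine ⟨max R R', fun X hX hev hgap ↦ ?_⟩
    obtain ⟨a, ⟨haG, ha⟩, hfa⟩ := hR X hX hev fun x hx y hy hxy ↦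
      (Int.ofNat_le.2 (le_max_left R R')).trans_lt (hgap hx hy hxy)
    obtain ⟨b, ⟨hbG, hb⟩, hgb⟩ := hR' X hX hev fun x hx y hy hxy ↦
      (Int.ofNat_le.2 (le_max_right R R')).trans_lt (hgap hx hy hxy)
    refine ⟨a * b, ⟨mul_mem haG hbG, mul_mem
      (rigidStabilizer_mono (tube_mono X (by exact_mod_cast le_max_left R R')) ha)
      (rigidStabilizer_mono (tube_mono X (by exact_mod_cast le_max_right R R')) hb)⟩,
      fun z hz ↦ ?_⟩
    have hgz : g z ∈ tube X ((r + M : ℕ) : ℝ) := by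
      exact_mod_cast apply_mem_tube hM hz
    rw [RelIso.mul_apply, RelIso.mul_apply, hgb hz, hfa hgz]
  one_mem' := ⟨one_mem _, fun _ ↦ ⟨0, fun _ _ _ _ ↦ ⟨1, one_mem _, fun _ _ ↦ rfl⟩⟩⟩
  inv_mem' := by
    rintro f ⟨hfD, hf⟩
    refine ⟨inv_mem hfD, fun r ↦ ?_⟩
    obtain ⟨M, hM⟩ := inv_mem hfD
    obtain ⟨R, hR⟩ := hf (r + M)
    refine ⟨R, fun X hX hev hgap ↦ ?_⟩
    obtain ⟨a, ha, hfa⟩ := hR X hX hev hgap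
    refine ⟨a⁻¹, inv_mem ha, fun z hz ↦ inv_apply_eq_of_apply_eq ?_⟩
    have hfz : f⁻¹ z ∈ tube X ((r + M : ℕ) : ℝ) := by
      exact_mod_cast apply_mem_tube hM hz
    rw [hfa hfz, RelIso.apply_inv_self]

theorem ActsOnUnits.mem_boundedDisplacement (hf : ActsOnUnits o p (fun _ ↦ ν) f)
    (hν : ν ∈ rigidStabilizer (Set.Icc 0 1)) : f ∈ boundedDisplacement := by
  refine ⟨1, fun z ↦ ?_⟩
  obtain ⟨m, hm, u, hu, rfl⟩ := exists_chart_eq o p z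
  have hcenter {v : ℝ} (hv : v ∈ Set.Icc (0 : ℝ) 1) : dist (chart o m v) (m / 2) ≤ 1 / 2 := by
    rw [dist_chart, abs_le]
    constructor <;> linarith [hv.1, hv.2]
  rw [hf m hm u hu]
  have := dist_triangle_right (chart o m (ν u)) (chart o m u) (m / 2)
  push_cast
  linarith [hcenter hu, hcenter (apply_mem_of_mem_rigidStabilizer hν hu)]

/-- If `h` compresses the balls around the units of `Y` into intervals on which `f` is trivial,
then `f * (h⁻¹ * f⁻¹ * h)` agrees with `f` on these balls. -/
theorem ActsOnUnits.exists_eqOn_tube (hK : IsDyadicBumpGroup K) (hG : ContainsUnitActions o G K)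
    (hfG : f ∈ G) (hf : ActsOnUnits o p (fun _ ↦ ν) f) (hfD : ∀ z, dist (f z) z ≤ M)
    (hγ : 0 ≤ γ) (hγδ : γ < δ) (hδ : δ ≤ 1) (hfix : ∀ u ∈ Set.Ioo γ δ, ν u = u)
    (hY : IsSelectable o G K Y) (hp : ∀ y ∈ Y, Even (y - p)) (r : ℕ)
    (hgap : Y.Pairwise fun x y ↦ 2 * ((2 * r + 2 : ℕ) : ℤ) ≤ |x - y|) :
    ∃ a ∈ G ⊓ rigidStabilizer (tube Y (r + 1 + M)), Set.EqOn a f (tube Y (r + 1 / 2)) := by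
  obtain ⟨h, hh, hmaps⟩ := hY.isCompressible hK hG hp (j := 2 * r + 2) (by lia)
    (pairwise_ballsDisjoint_prod_singleton hgap) (1 / 2) (by norm_num) γ δ hγ hγδ hδ
  obtain ⟨hhG, hhB⟩ := Subgroup.mem_inf.1 hh
  have hhT : h ∈ rigidStabilizer (tube Y (r + 1)) := by
    convert ballStabilizer_prod_singleton_le Y _ hhB using 3
    push_cast
    ring
  have hconj := conj_mem_rigidStabilizer (inv_mem hhT) fun z hz ↦ apply_mem_tube hfD hz
  refine ⟨f * h⁻¹ * f⁻¹ * h, Subgroup.mem_inf.2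
    ⟨mul_mem (mul_mem (mul_mem hfG (inv_mem hhG)) (inv_mem hfG)) hhG,
      mul_mem hconj (rigidStabilizer_mono (tube_mono Y (by simp)) hhT)⟩, fun z hz ↦ ?_⟩
  obtain ⟨y, hy, hzy⟩ := mem_tube.1 hz
  obtain ⟨u, hu, huz⟩ := hmaps (y, 2 * r + 2) ⟨hy, rfl⟩ (x := z) (by
    convert hzy using 2
    push_cast
    ring)
  have hfu : f (h z) = h z := by
    rw [← huz, hf y (hp y hy) u ⟨hγ.trans hu.1.le, hu.2.le.trans hδ⟩, hfix u hu]
  rw [RelIso.mul_apply, RelIso.mul_apply, RelIso.mul_apply, inv_apply_eq_of_apply_eq hfu,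
    RelIso.inv_apply_self]

theorem IsSelectable.neighbour_image (hK : IsDyadicBumpGroup K) (hG : ContainsUnitActions o G K)
    (hX : IsSelectable o G K X) (j : ℤ) : IsSelectable o G K (neighbour o j '' X) := by
  convert (hX.neighbourPreimage hK hG (-j) 1).union hK.isCompactlyTransitive hG
    (hX.neighbourPreimage hK hG j (-1)) using 1
  have hzero (m : ℤ) : neighbour o 0 m = m := by simp [neighbour]
  have hzero' (m : ℤ) : relOrientation o 0 m = 1 := by
    rw [relOrientation, hzero, Int.units_mul_self]
  ext m
  constructor
  · rintro ⟨x, hx, rfl⟩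
    rcases Int.units_eq_one_or (relOrientation o j x) with h | h
    · refine .inl ⟨?_, ?_⟩
      · simpa [neighbour_neighbour, h, hzero] using hx
      · simp [relOrientation_neighbour, h, hzero']
    · refine .inr ⟨?_, ?_⟩
      · simpa [neighbour_neighbour, h, hzero] using hx
      · simp [relOrientation_neighbour, h, hzero']
  · rintro (⟨hm, h⟩ | ⟨hm, h⟩) <;> exact ⟨_, hm, by simp [neighbour_neighbour, h, hzero]⟩

theorem even_neighbour_sub_of_even {j m : ℤ} (hm : Even m) (hj : Even (j - p)) :
    Even (neighbour o j m - p) := by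
  rw [neighbour]
  rcases Int.units_eq_one_or (o m) with h | h <;> rw [h] <;>
    simp only [Units.val_one, Units.val_neg] <;> grind

theorem ActsOnUnits.mem_localizableSubgroup_of_apply_eq (hK : IsDyadicBumpGroup K)
    (hG : ContainsUnitActions o G K) (hfG : f ∈ G) (hf : ActsOnUnits o p (fun _ ↦ ν) f)
    (hν : ν ∈ rigidStabilizer (Set.Icc 0 1)) (hγ : 0 ≤ γ) (hγδ : γ < δ) (hδ : δ ≤ 1)
    (hfix : ∀ u ∈ Set.Ioo γ δ, ν u = u) : f ∈ localizableSubgroup o G K := by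
  have hfD := hf.mem_boundedDisplacement hν
  refine ⟨hfD, fun r ↦ ?_⟩
  obtain ⟨M, hM⟩ := hfD
  obtain ⟨j, hj, hj1⟩ : ∃ j : ℤ, Even (j - p) ∧ |j| ≤ 1 := by
    rcases Int.even_or_odd p with h | h
    · exact ⟨0, by simpa using h, by simp⟩
    · exact ⟨1, odd_one.sub_odd h, by simp⟩
  have hclose (x : ℤ) : |neighbour o j x - x| ≤ 1 := by
    rwa [neighbour, add_sub_cancel_left, abs_mul_units]
  refine ⟨4 * r + 6 + M, fun X hX hev hgap ↦ ?_⟩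
  obtain ⟨a, ⟨haG, ha⟩, hfa⟩ := hf.exists_eqOn_tube hK hG hfG hM hγ hγδ hδ hfix
    (hX.neighbour_image hK hG j) (Set.forall_mem_image.2 fun x hx ↦
      even_neighbour_sub_of_even (hev x hx) hj) r (by
    rintro _ ⟨x, hx, rfl⟩ _ ⟨y, hy, rfl⟩ hne
    have := hgap hx hy (mt (congrArg _) hne)
    have := abs_le.1 (hclose x)
    have := abs_le.1 (hclose y)
    grind)
  refine ⟨a, ⟨haG, rigidStabilizer_mono ?_ ha⟩, hfa.mono ?_⟩
  · refine (tube_subset_tube (Set.forall_mem_image.2 fun x hx ↦ ⟨x, hx, hclose x⟩) _).trans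
      (tube_mono X ?_)
    push_cast
    linarith
  · exact tube_subset_tube
      (fun x hx ↦ ⟨_, Set.mem_image_of_mem _ hx, abs_sub_comm _ x ▸ hclose x⟩) _

end Localization

section LinearAtEnds

/-- Near `0` and, after reflection, near `1` the map `f` is the multiplication by `s`. -/
def IsLinearAtEnds (s : ℝ) (f : ℝ ≃o ℝ) : Prop :=
  ∀ᶠ t in 𝓝[≥] 0, f t = s * t ∧ f (1 - t) = 1 - s * t

variable {s s' : ℝ} {f g : ℝ ≃o ℝ} {H L : Subgroup (ℝ ≃o ℝ)}

theorem tendsto_const_mul_nhdsGE_zero (hs : 0 ≤ s) : Tendsto (s * ·) (𝓝[≥] 0) (𝓝[≥] 0) := by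
  refine tendsto_nhdsWithin_iff.2 ⟨?_, ?_⟩
  · exact tendsto_nhdsWithin_of_tendsto_nhds (by simpa using (continuous_const_mul s).tendsto 0)
  · filter_upwards [self_mem_nhdsWithin] with t ht using mul_nonneg hs ht

namespace IsLinearAtEnds

theorem mul (hf : IsLinearAtEnds s f) (hg : IsLinearAtEnds s' g) (hs' : 0 ≤ s') :
    IsLinearAtEnds (s * s') (f * g) := by
  filter_upwards [hg, (tendsto_const_mul_nhdsGE_zero hs').eventually hf] with t hgt hft
  simp only [RelIso.mul_apply, hgt, hft, mul_assoc, and_self]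

theorem inv (hf : IsLinearAtEnds s f) (hs : 0 < s) : IsLinearAtEnds s⁻¹ f⁻¹ := by
  filter_upwards [(tendsto_const_mul_nhdsGE_zero (inv_nonneg.2 hs.le)).eventually hf] with t ht
  rw [mul_inv_cancel_left₀ hs.ne'] at ht
  exact ⟨inv_apply_eq_of_apply_eq ht.1, inv_apply_eq_of_apply_eq ht.2⟩

theorem pow (hf : IsLinearAtEnds s f) (hs : 0 < s) (n : ℕ) : IsLinearAtEnds (s ^ n) (f ^ n) := by
  induction n with
  | zero => exact .of_forall fun t ↦ by simp
  | succ n ih =>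
    rw [pow_succ, pow_succ]
    exact ih.mul hf hs.le

theorem zpow (hf : IsLinearAtEnds s f) (hs : 0 < s) (k : ℤ) :
    IsLinearAtEnds (s ^ k) (f ^ k) := by
  obtain ⟨n, rfl | rfl⟩ := k.eq_nat_or_neg
  · simpa only [zpow_natCast] using hf.pow hs n
  · simpa only [zpow_neg, zpow_natCast] using (hf.pow hs n).inv (pow_pos hs n)

end IsLinearAtEnds

theorem isLinearAtEnds_endBump : IsLinearAtEnds 2 endBump := by
  filter_upwards [Icc_mem_nhdsGE (show (0 : ℝ) < 1 / 16 by norm_num)] with t ht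
  exact ⟨endBump_apply_near_zero ht.1 ht.2, by
    rw [endBump_apply_near_one (by linarith [ht.2]) (by linarith [ht.1])]
    ring⟩

theorem InH.exists_isLinearAtEnds (hf : InH f) : ∃ k : ℤ, IsLinearAtEnds (2 ^ k) f := by
  obtain ⟨-, k, ε, hε, h0, h1⟩ := hf
  refine ⟨k, ?_⟩
  filter_upwards [Icc_mem_nhdsGE hε] with t ht
  exact ⟨h0 t ht, by rw [h1 (1 - t) ⟨by linarith [ht.2], by linarith [ht.1]⟩]; ring⟩

theorem IsLinearAtEnds.mem_compactSupportSubgroup (hf : IsLinearAtEnds 1 f) (hfH : f ∈ H)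
    (hf01 : f ∈ rigidStabilizer (Set.Icc 0 1)) : f ∈ compactSupportSubgroup H := by
  obtain ⟨ε, hε, h⟩ := mem_nhdsGE_iff_exists_Icc_subset.1 hf
  refine ⟨hfH, ε, hε, mem_rigidStabilizer.2 fun x hx ↦ by_contra fun hne ↦ ?_⟩
  obtain ⟨hx0, hx1⟩ := mem_of_apply_ne hf01 hne
  rcases lt_or_ge x ε with hxε | hxε
  · exact hne (by simpa using (h ⟨hx0, hxε.le⟩).1)
  · have hx' : 1 - ε < x := not_le.1 fun h ↦ hx ⟨hxε, h⟩
    exact hne (by simpa using (h (show 1 - x ∈ Set.Icc 0 ε from ⟨by linarith, by linarith⟩)).2)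

theorem le_of_endBump_mem (hH : ∀ f : ℝ ≃o ℝ, f ∈ H ↔ InH f) (he : endBump ∈ L)
    (hL : compactSupportSubgroup H ≤ L) : H ≤ L := fun f hf ↦ by
  obtain ⟨k, hk⟩ := ((hH f).1 hf).exists_isLinearAtEnds
  have hH01 {g} (hg : g ∈ H) : g ∈ rigidStabilizer (Set.Icc 0 1) :=
    mem_rigidStabilizer.2 ((hH g).1 hg).1.1
  have hmem : endBump ^ (-k) * f ∈ H := mul_mem (zpow_mem ((hH _).2 inH_endBump) _) hf
  have hlin : IsLinearAtEnds 1 (endBump ^ (-k) * f) := by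
    convert (isLinearAtEnds_endBump.zpow two_pos (-k)).mul hk (by positivity) using 1
    rw [zpow_neg, inv_mul_cancel₀ (by positivity)]
  exact (L.mul_mem_cancel_left (zpow_mem he (-k))).1
    (hL (hlin.mem_compactSupportSubgroup hmem (hH01 hmem)))

end LinearAtEnds

section UnitActions

/-- The homeomorphisms of `[0, 1]` whose simultaneous action on the units of the parity of `p`
belongs to `L`. -/
def unitActionSubgroup (o : ℤ → ℤˣ) (p : ℤ) (L : Subgroup (ℝ ≃o ℝ)) : Subgroup (ℝ ≃o ℝ) where
  carrier := {ν | ν ∈ rigidStabilizer (Set.Icc 0 1) ∧ ∃ f ∈ L, ActsOnUnits o p (fun _ ↦ ν) f}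
  mul_mem' := by
    rintro ν μ ⟨hν, f, hfL, hf⟩ ⟨hμ, g, hgL, hg⟩
    exact ⟨mul_mem hν hμ, f * g, mul_mem hfL hgL, hf.mul hg fun _ ↦ hμ⟩
  one_mem' := ⟨one_mem _, 1, one_mem L, .one⟩
  inv_mem' := by
    rintro ν ⟨hν, f, hfL, hf⟩
    exact ⟨inv_mem hν, f⁻¹, inv_mem hfL, hf.inv fun _ ↦ hν⟩

variable {o : ℤ → ℤˣ} {G H : Subgroup (ℝ ≃o ℝ)} {f g ν : ℝ ≃o ℝ} {p q : ℤ}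

theorem ActsOnUnits.eq {ν : ℤ → ℝ ≃o ℝ} (hf : ActsOnUnits o p ν f) (hg : ActsOnUnits o p ν g) :
    f = g := RelIso.ext fun z ↦ by
  obtain ⟨m, hm, u, hu, rfl⟩ := exists_chart_eq o p z
  rw [hf m hm u hu, hg m hm u hu]

theorem ActsOnUnits.congr_parity {ν : ℤ → ℝ ≃o ℝ} (hf : ActsOnUnits o p ν f) (h : Even (q - p)) :
    ActsOnUnits o q ν f := fun m hm ↦
  hf m (by simpa using hm.add h)

theorem ActsOnUnits.mem_localizableSubgroup (hH : ∀ f : ℝ ≃o ℝ, f ∈ H ↔ InH f)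
    (hG : ContainsUnitActions o G H) (hν : ν ∈ H) (hf : ActsOnUnits o p (fun _ ↦ ν) f) :
    f ∈ localizableSubgroup o G (compactSupportSubgroup H) := by
  have hK := isDyadicBumpGroup_compactSupportSubgroup hH
  have hK' := hK.isCompactlyTransitive
  have hGK := hG.mono (compactSupportSubgroup_le H)
  suffices H ≤ unitActionSubgroup o p (localizableSubgroup o G (compactSupportSubgroup H)) by
    obtain ⟨-, g, hgL, hg⟩ := this hν
    rwa [hf.eq hg]
  refine le_of_endBump_mem hH ⟨endBump_mem_rigidStabilizer, ?_⟩ fun μ hμ ↦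
    ⟨hK'.le_rigidStabilizer hμ, ?_⟩
  · obtain ⟨g, hgG, hg⟩ := hG p endBump ((hH _).2 inH_endBump)
    exact ⟨g, hg.mem_localizableSubgroup_of_apply_eq hK hGK hgG endBump_mem_rigidStabilizer
      (by norm_num) (by norm_num) (by norm_num)
      fun u hu ↦ endBump_apply_middle (Set.Ioo_subset_Icc_self hu), hg⟩
  · obtain ⟨g, hgG, hg⟩ := hGK p μ hμ
    obtain ⟨ε, hε, hε', hμε⟩ := hK'.exists_mem_rigidStabilizer _ hμ
    exact ⟨g, hg.mem_localizableSubgroup_of_apply_eq hK hGK hgG (hK'.le_rigidStabilizer hμ)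
      le_rfl hε (by linarith)
      fun u hu ↦ mem_rigidStabilizer.1 hμε u fun hu' ↦ hu.2.not_ge hu'.1, hg⟩

end UnitActions

/-! ### Bounded acyclicity -/

section Acyclicity

variable {o : ℤ → ℤˣ} {G K : Subgroup (ℝ ≃o ℝ)}

theorem inv_mul_mem_rigidStabilizer_compl {α : Type*} [LE α] {a f : α ≃o α} {s : Set α}
    (h : Set.EqOn a f s) : a⁻¹ * f ∈ rigidStabilizer sᶜ :=
  mem_rigidStabilizer.2 fun _ hx ↦ inv_apply_eq_of_apply_eq (h (not_not.1 hx))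

theorem exists_decomposition_of_mem_localizableSubgroup {f g : G}
    (hf : (f : ℝ ≃o ℝ) ∈ localizableSubgroup o G K)
    (hg : (g : ℝ ≃o ℝ) ∈ localizableSubgroup o G K) :
    ∃ R : ℕ, ∀ X : Set ℤ, IsSelectable o G K X → (∀ x ∈ X, Even x) →
      (X.Pairwise fun x y ↦ (R : ℤ) < |x - y|) →
        ∃ a ∈ (rigidStabilizer (tube X R)).subgroupOf G,
        ∃ b ∈ (rigidStabilizer (tube X (1 : ℕ))ᶜ).subgroupOf G,
        ∃ a' ∈ (rigidStabilizer (tube X R)).subgroupOf G,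
        ∃ b' ∈ (rigidStabilizer (tube X (1 : ℕ))ᶜ).subgroupOf G,
          f = a * b ∧ g = a' * b' ∧ b * a' * b⁻¹ ∈ (rigidStabilizer (tube X R)).subgroupOf G := by
  obtain ⟨⟨M, hM⟩, hf⟩ := hf
  obtain ⟨R, hR⟩ := hf 1
  obtain ⟨R', hR'⟩ := hg.2 1
  refine ⟨R + R' + M, fun X hX hev hgap ↦ ?_⟩
  obtain ⟨a, ⟨haG, ha⟩, hfa⟩ := hR X hX hev (hgap.imp fun _ _ h ↦ by push_cast at h; linarith)
  obtain ⟨a', ⟨haG', ha'⟩, hga⟩ := hR' X hX hev (hgap.imp fun _ _ h ↦ by push_cast at h; linarith)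
  lift a to G using haG
  lift a' to G using haG'
  have hle {s : ℕ} (hs : s ≤ R + R' + M) :
      rigidStabilizer (tube X s) ≤ rigidStabilizer (tube X (R + R' + M : ℕ)) :=
    rigidStabilizer_mono (tube_mono X (by exact_mod_cast hs))
  have ha : a ∈ (rigidStabilizer (tube X (R + R' + M : ℕ))).subgroupOf G := hle (by lia) ha
  have hconj : f * a' * f⁻¹ ∈ (rigidStabilizer (tube X (R + R' + M : ℕ))).subgroupOf G :=
    hle (s := R' + M) (by lia)
      (by exact_mod_cast conj_mem_rigidStabilizer ha' fun z hz ↦ apply_mem_tube hM hz)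
  refine ⟨a, ha, a⁻¹ * f, inv_mul_mem_rigidStabilizer_compl hfa, a', hle (by lia) ha', a'⁻¹ * g,
    inv_mul_mem_rigidStabilizer_compl hga, by group, by group, ?_⟩
  convert mul_mem (mul_mem (inv_mem ha) hconj) ha using 1
  group

theorem is2BoundedlyAcyclic_of_le_localizableSubgroup (hK : IsDyadicBumpGroup K)
    (hG : ContainsUnitActions o G K) (ho : IsQuasiPeriodicOrientation o)
    (hloc : G ≤ localizableSubgroup o G K) : Is2BoundedlyAcyclic G := by
  have hsel (n : ℕ) := isSelectable_markers hK hG n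
  choose N hN using fun n : ℕ ↦ ho.exists_markers_sparse (4 * n + 4)
  have hev (n : ℕ) : ∀ x ∈ markers o (N n), Even x := fun x hx ↦ hx.1
  choose L hL using fun n : ℕ ↦ ho.exists_mem_markers (N n)
  refine is2BoundedlyAcyclic_of_eventually_decomposition (l := atTop)
    (A := fun n ↦ (ballStabilizer (markers o (N n) ×ˢ {2 * n + 2})).subgroupOf G)
    (B := fun n ↦ (ballStabilizer (gaps (markers o (N n)))).subgroupOf G) (fun n ↦ ?_)
    (fun n ↦ ((hsel _).isBallSystem_gaps hK hG (hev n) (hL n)).homogeneousCocyclesVanishOn hK hG)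
    fun f g ↦ ?_
  · refine ((hsel _).isBallSystem_prod_singleton hK.isCompactlyTransitive hG (hev n) (by lia)
      ((hN n).imp fun x y h ↦ ?_)).homogeneousCocyclesVanishOn hK hG
    push_cast at h ⊢
    linarith
  obtain ⟨R, hR⟩ := exists_decomposition_of_mem_localizableSubgroup (hloc f.2) (hloc g.2)
  filter_upwards [eventually_ge_atTop R] with n hn
  have hA : rigidStabilizer (tube (markers o (N n)) R) ≤
      ballStabilizer (markers o (N n) ×ˢ {2 * n + 2}) :=
    rigidStabilizer_tube_le_ballStabilizer (by
      rw [← Nat.cast_le (α := ℝ)] at hn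
      push_cast
      linarith)
  have hB := rigidStabilizer_compl_tube_le_ballStabilizer (ε := (1 : ℕ)) (hev n) (hL n) (by simp)
  obtain ⟨a, ha, b, hb, a', ha', b', hb', hf, hg, hconj⟩ := hR _ (hsel (N n)) (hev n)
    ((hN n).imp fun x y h ↦ by push_cast at h; lia)
  exact ⟨a, hA ha, b, hB hb, a', hA ha', b', hB hb', hf, hg, hA hconj⟩

end Acyclicity

section Generators

variable {ρ : ℤ → Letter} {ν ζ χ : ℝ ≃o ℝ}

theorem IsZeta.actsOnUnits (h : IsZeta ρ ν ζ) (hρ : IsLabelling ρ) :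
    ActsOnUnits (orientation ρ) 1 (fun _ ↦ ν) ζ := fun m hm u hu ↦ by
  obtain ⟨n, rfl⟩ : Odd m := by simpa [Int.even_sub_one] using hm
  rcases (hρ (2 * n + 1)).2 (odd_two_mul_add_one n) with hb | hb
  · have hchart (v : ℝ) : chart (orientation ρ) (2 * n + 1) v = n + v := by
      simp [chart, orientation, hb, Letter.sign]; ring
    rw [hchart, hchart, (h n _ ⟨by linarith [hu.1], by linarith [hu.2]⟩).1 hb, add_sub_cancel_left]
  · have hchart (v : ℝ) : chart (orientation ρ) (2 * n + 1) v = n + 1 - v := by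
      simp [chart, orientation, hb, Letter.sign]; ring
    rw [hchart, hchart, (h n _ ⟨by linarith [hu.2], by linarith [hu.1]⟩).2 hb, sub_sub_cancel]

theorem IsChi.actsOnUnits (h : IsChi ρ ν χ) (hρ : IsLabelling ρ) :
    ActsOnUnits (orientation ρ) 0 (fun _ ↦ ν) χ := fun m hm u hu ↦ by
  obtain ⟨n, rfl⟩ := even_iff_exists_two_mul.1 (sub_zero m ▸ hm)
  rcases (hρ (2 * n)).1 (even_two_mul n) with ha | ha
  · have hchart (v : ℝ) : chart (orientation ρ) (2 * n) v = n - 1 / 2 + v := by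
      simp [chart, orientation, ha, Letter.sign]; ring
    rw [hchart, hchart, (h n _ ⟨by linarith [hu.1], by linarith [hu.2]⟩).1 ha, add_sub_cancel_left]
  · have hchart (v : ℝ) : chart (orientation ρ) (2 * n) v = n + 1 / 2 - v := by
      simp [chart, orientation, ha, Letter.sign]; ring
    rw [hchart, hchart, (h n _ ⟨by linarith [hu.2], by linarith [hu.1]⟩).2 ha, sub_sub_cancel]

theorem containsUnitActions_closure {ι : Type*} {o : ℤ → ℤˣ} {ν ζ χ : ι → ℝ ≃o ℝ}
    (hν : ∀ i, ν i ∈ rigidStabilizer (Set.Icc 0 1))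
    (hζ : ∀ i, ActsOnUnits o 1 (fun _ ↦ ν i) (ζ i))
    (hχ : ∀ i, ActsOnUnits o 0 (fun _ ↦ ν i) (χ i)) :
    ContainsUnitActions o (Subgroup.closure (Set.range ζ ∪ Set.range χ))
      (Subgroup.closure (Set.range ν)) := fun p μ hμ ↦ by
  suffices Subgroup.closure (Set.range ν) ≤ unitActionSubgroup o p _ from (this hμ).2
  refine (Subgroup.closure_le _).2 (Set.forall_mem_range.2 fun i ↦ ⟨hν i, ?_⟩)
  rcases Int.even_or_odd p with hp | hp
  · exact ⟨χ i, Subgroup.subset_closure (.inr ⟨i, rfl⟩),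
      (hχ i).congr_parity (by simpa using hp)⟩
  · exact ⟨ζ i, Subgroup.subset_closure (.inl ⟨i, rfl⟩),
      (hζ i).congr_parity (hp.sub_odd odd_one)⟩

end Generators

theorem vanishing_second_bounded_cohomology_real_general {ι : Type*} {ρ : ℤ → Letter}
    (hρ : IsQuasiPeriodic ρ) {ν ζ χ : ι → ℝ ≃o ℝ}
    (hν : ∀ f : ℝ ≃o ℝ, f ∈ Subgroup.closure (Set.range ν) ↔ InH f)
    (hζ : ∀ i, IsZeta ρ (ν i) (ζ i)) (hχ : ∀ i, IsChi ρ (ν i) (χ i)) :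
    Is2BoundedlyAcyclic (Subgroup.closure (Set.range ζ ∪ Set.range χ)) := by
  have hνH (i) : ν i ∈ Subgroup.closure (Set.range ν) := Subgroup.subset_closure ⟨i, rfl⟩
  have hζ' (i) := (hζ i).actsOnUnits hρ.1
  have hχ' (i) := (hχ i).actsOnUnits hρ.1
  have hG := containsUnitActions_closure
    (fun i ↦ mem_rigidStabilizer.2 ((hν _).1 (hνH i)).1.1) hζ' hχ'
  refine is2BoundedlyAcyclic_of_le_localizableSubgroup
    (isDyadicBumpGroup_compactSupportSubgroup hν) (hG.mono (compactSupportSubgroup_le _))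
    hρ.isQuasiPeriodicOrientation ((Subgroup.closure_le _).2 (Set.union_subset ?_ ?_)) <;>
    rintro _ ⟨i, rfl⟩
  · exact (hζ' i).mem_localizableSubgroup hν hG (hνH i)
  · exact (hχ' i).mem_localizableSubgroup hν hG (hνH i)

/-- For a quasi-periodic labelling `ρ`, the group `G_ρ` has vanishing
second bounded cohomology with trivial real coefficients: every bounded 2-cocycle on
`G_ρ` is the coboundary of a bounded function. -/
theorem vanishing_second_bounded_cohomology_real
    (ρ : ℤ → Letter) (hρ : IsQuasiPeriodic ρ)
    (H : Subgroup (ℝ ≃o ℝ)) (hH : ∀ f : ℝ ≃o ℝ, f ∈ H ↔ InH f)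
    (ν₁ ν₂ ν₃ : ℝ ≃o ℝ) (hgen : Subgroup.closure {ν₁, ν₂, ν₃} = H)
    (ζ₁ ζ₂ ζ₃ χ₁ χ₂ χ₃ : ℝ ≃o ℝ)
    (hζ₁ : IsZeta ρ ν₁ ζ₁) (hζ₂ : IsZeta ρ ν₂ ζ₂) (hζ₃ : IsZeta ρ ν₃ ζ₃)
    (hχ₁ : IsChi ρ ν₁ χ₁) (hχ₂ : IsChi ρ ν₂ χ₂) (hχ₃ : IsChi ρ ν₃ χ₃)
    (G : Subgroup (ℝ ≃o ℝ))
    (hG : G = Subgroup.closure {ζ₁, ζ₂, ζ₃, χ₁, χ₂, χ₃})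
    (ω : ↥G → ↥G → ℝ) (hω : IsBounded2Cocycle ω) :
    IsCoboundaryOfBounded ω := by
  have hν : Set.range ![ν₁, ν₂, ν₃] = {ν₁, ν₂, ν₃} := by
    simp only [Matrix.range_cons, Matrix.range_empty, Set.union_empty, Set.singleton_union]
  have hζχ : Set.range ![ζ₁, ζ₂, ζ₃] ∪ Set.range ![χ₁, χ₂, χ₃] = {ζ₁, ζ₂, ζ₃, χ₁, χ₂, χ₃} := by
    simp only [Matrix.range_cons, Matrix.range_empty, Set.union_empty, Set.singleton_union,
      Set.insert_union]
  rw [← hζχ] at hG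
  subst hG
  exact vanishing_second_bounded_cohomology_real_general hρ (ν := ![ν₁, ν₂, ν₃])
    (by rwa [hν, hgen]) (by simp [Fin.forall_fin_succ, *]) (by simp [Fin.forall_fin_succ, *]) ω hω
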